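/- Let f: ℝ^n → ℝ^n, n ≥ 2, be a homeomorphism such that K^{fine}_f(x) ≤ K < ∞ for every x ∈ ℝ^n. Then f is quasiconformal: f ∈ W^{1,n}_{loc}(ℝ^n; ℝ^n) and ‖∇f(x)‖^n ≤ K'|det ∇f(x)| a.e. for some constant K' < ∞. -/

import Mathlib

open MeasureTheory Metric Set Filter ENNReal NNReal Topology

noncomputable section

/-- Euclidean space `ℝⁿ`. -/
abbrev En (n : ℕ) : Type := EuclideanSpace ℝ (Fin n)

variable {n : ℕ}

/-- `g` is the weak (distributional) gradient of `u : ℝⁿ → ℝ` on all of `ℝⁿ`. -/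
def IsWeakGrad (u : En n → ℝ) (g : En n → (En n →L[ℝ] ℝ)) : Prop :=
  ∀ φ : En n → ℝ, ContDiff ℝ 1 φ → HasCompactSupport φ →
    ∀ v : En n, ∫ x, u x * fderiv ℝ φ x v = - ∫ x, φ x * g x v

/-- The Sobolev 1-capacity: infimum of `W^{1,1}` norms of functions `u ≥ 1` on a
neighborhood of `A`. -/
def cap1 (A : Set (En n)) : ℝ≥0∞ :=
  sInf { c : ℝ≥0∞ | ∃ u : En n → ℝ, ∃ g : En n → (En n →L[ℝ] ℝ),
    Integrable u ∧ Integrable (fun x => ‖g x‖) ∧ IsWeakGrad u g ∧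
    (∃ V : Set (En n), IsOpen V ∧ A ⊆ V ∧ ∀ x ∈ V, 1 ≤ u x) ∧
    c = ENNReal.ofReal ((∫ x, |u x|) + ∫ x, ‖g x‖) }

/-- A set `U ⊆ ℝⁿ` is 1-finely open. -/
def FinelyOpen1 (U : Set (En n)) : Prop :=
  ∀ x ∈ U, Tendsto (fun r : ℝ => cap1 (Uᶜ ∩ ball x r) / ENNReal.ofReal (r ^ (n - 1)))
    (𝓝[>] 0) (𝓝 0)

/-- The relaxed quasiconformality quotient `K_{f,U}(x,r)`. -/
def KfU (f : En n → En n) (U : Set (En n)) (x : En n) (r : ℝ) : ℝ≥0∞ :=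
  if volume (f '' ball x r) = 0 then ∞
  else (EMetric.diam (f '' (ball x r ∩ U)) ^ n / volume (f '' ball x r)) ^ (((n : ℝ) - 1)⁻¹)

/-- Fine quasiconformal dilatation `K_f^fine(x)`. -/
def Kfine (f : En n → En n) (x : En n) : ℝ≥0∞ :=
  ⨅ (U : Set (En n)) (_ : FinelyOpen1 U) (_ : x ∈ U),
    Filter.limsup (fun r => KfU f U x r) (𝓝[>] 0)

/-- Metric quasiconformal dilatation `K_f(x)`. -/
def Kmetric (f : En n → En n) (x : En n) : ℝ≥0∞ :=
  Filter.limsup (fun r => KfU f univ x r) (𝓝[>] 0)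

/-- Volume derivative (Jacobian) `J_f(x)`. -/
def Jvol (f : En n → En n) (x : En n) : ℝ≥0∞ :=
  Filter.limsup (fun r => volume (f '' ball x r) / volume (ball x r)) (𝓝[>] 0)

/-- `g` is the weak gradient of the mapping `f : ℝⁿ → ℝⁿ` on the open set `Ω`. -/
def HasWeakGradOn (f : En n → En n) (g : En n → (En n →L[ℝ] En n)) (Ω : Set (En n)) : Prop :=
  ∀ φ : En n → ℝ, ContDiff ℝ 1 φ → HasCompactSupport φ → tsupport φ ⊆ Ω →
    ∀ v : En n, ∫ x in Ω, (fderiv ℝ φ x v) • f x = - ∫ x in Ω, φ x • g x v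

/-- The precise representative `f*` (componentwise limsup of ball averages). -/
def precise (f : En n → En n) (x : En n) : En n :=
  (EuclideanSpace.equiv (Fin n) ℝ).symm
    (fun i => Filter.limsup (fun r => ⨍ y in ball x r, f y i) (𝓝[>] 0))

/-- Centered Hardy–Littlewood maximal function of `u : ℝⁿ → ℝ`. -/
def maxFn (u : En n → ℝ) (x : En n) : ℝ≥0∞ :=
  ⨆ (r : ℝ) (_ : 0 < r), (volume (ball x r))⁻¹ * ∫⁻ y in ball x r, ‖u y‖₊

/-- Centered Hardy–Littlewood maximal function of `ρ : ℝⁿ → ℝ≥0∞`. -/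
def maxFn' (ρ : En n → ℝ≥0∞) (x : En n) : ℝ≥0∞ :=
  ⨆ (r : ℝ) (_ : 0 < r), (volume (ball x r))⁻¹ * ∫⁻ y in ball x r, ρ y

/-!
The 1-capacity dominates Lebesgue measure, so a set that is 1-finely open at `x` has density one
there, and only this density is used. Let `U` be nearly optimal in the definition of the dilatation
at `x`, so that `diam f(B(x, r) ∩ U)ⁿ ≤ C |f(B(x, r))|` for small `r`. For two points `x`, `y` that
share a scale, the density-large sets meet in the intersection of the balls of radius
`2 |x - y|`, whence `|f x - f y|ⁿ ≤ C |f(B(x, 4 |x - y|))|`; countably many scales cover `ℝⁿ`.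

Where the measure `A ↦ |f(A)|` has a finite upper density, that is a.e., this makes `f` Lipschitz on
countably many pieces, with a derivative `g` such that `‖g‖ⁿ ≤ C J` for the density `J` of
`A ↦ |f(A)|`, while the area formula gives `J ≤ |det g|`.

The remaining null set `N` is covered by balls of small total volume. By Hölder's inequality and
Fubini's theorem `f(N ∩ ℓ)` is null for almost every coordinate line `ℓ`. On such a line the
Lipschitz constants of the pieces are integrable, so `f` is absolutely continuous there, and
integrating by parts line by line identifies `g` as the weak gradient.
-/

section Line

variable {E : Type*} [NormedAddCommGroup E] [NormedSpace ℝ E] {e : E}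

lemma isometry_sub_smul (he : ‖e‖ = 1) (y : E) : Isometry fun s : ℝ => y - s • e :=
  Isometry.of_dist_eq fun s t => by
    rw [dist_sub_left, dist_eq_norm, ← sub_smul, norm_smul, he, mul_one, dist_eq_norm]

lemma volume_preimage_sub_smul_ball_le (he : ‖e‖ = 1) (x y : E) (r : ℝ) :
    volume ((fun s : ℝ => y - s • e) ⁻¹' ball x r) ≤ ENNReal.ofReal (2 * r) := by
  refine (Real.volume_le_diam _).trans ?_
  rw [← (isometry_sub_smul he y).ediam_image, ENNReal.ofReal_mul zero_le_two, ofReal_ofNat]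
  refine (ediam_mono (image_preimage_subset _ _)).trans ?_
  rw [← Metric.eball_ofReal]
  exact ediam_eball_le

lemma integral_norm_comp_sub_smul_le (he : ‖e‖ = 1) {χ : E → ℝ} {C r : ℝ} (hr : 0 ≤ r)
    (hC : ∀ z, ‖χ z‖ ≤ C) {x : E} (hsupp : Function.support χ ⊆ ball x r) (y : E) :
    ∫ s : ℝ, ‖χ (y - s • e)‖ ≤ 2 * r * C := by
  set T : Set ℝ := (fun s : ℝ => y - s • e) ⁻¹' ball x r
  have hT : volume T ≤ ENNReal.ofReal (2 * r) := volume_preimage_sub_smul_ball_le he x y r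
  have hCnn : 0 ≤ C := (norm_nonneg _).trans (hC 0)
  rw [← setIntegral_eq_integral_of_forall_compl_eq_zero (s := T) fun s hs =>
    norm_eq_zero.2 (Function.notMem_support.1 fun h => hs (hsupp h))]
  calc ∫ s in T, ‖χ (y - s • e)‖ ≤ ‖∫ s in T, ‖χ (y - s • e)‖‖ := le_abs_self _
    _ ≤ C * volume.real T := norm_setIntegral_le_of_norm_le_const
        (hT.trans_lt ENNReal.ofReal_lt_top) fun s _ => by simpa using hC (y - s • e)
    _ ≤ C * (2 * r) := by
        gcongr
        exact ENNReal.toReal_le_of_le_ofReal (by positivity) hT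
    _ = 2 * r * C := mul_comm _ _

lemma integrable_comp_sub_smul (he : ‖e‖ = 1) {χ : E → ℝ} (hχ : Continuous χ)
    (hχc : HasCompactSupport χ) (y : E) : Integrable fun s : ℝ => χ (y - s • e) :=
  (hχ.comp (isometry_sub_smul he y).continuous).integrable_of_hasCompactSupport
    (hχc.comp_isClosedEmbedding (isometry_sub_smul he y).isClosedEmbedding)

lemma integrable_mul_comp_sub_smul [MeasurableSpace E] [BorelSpace E] {ν : Measure E} (he : ‖e‖ = 1)
    {u χ : E → ℝ} (hu : Integrable u ν) (hχ : Continuous χ) (hχc : HasCompactSupport χ) :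
    Integrable (Function.uncurry fun (y : E) (s : ℝ) => u y * χ (y - s • e))
      (ν.prod volume) := by
  obtain ⟨C, hC⟩ := hχc.exists_bound_of_continuous hχ
  obtain ⟨r, hr, hsupp⟩ := hχc.isBounded.subset_ball_lt 0 (0 : E)
  have hmeas : AEStronglyMeasurable (fun p : E × ℝ => u p.1 * χ (p.1 - p.2 • e))
      (ν.prod volume) :=
    hu.aestronglyMeasurable.comp_fst.mul
      (hχ.comp (by fun_prop : Continuous fun p : E × ℝ => p.1 - p.2 • e)).aestronglyMeasurable
  refine (integrable_prod_iff hmeas).2 ⟨Eventually.of_forall fun y =>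
    (integrable_comp_sub_smul he hχ hχc y).const_mul (u y), ?_⟩
  refine (hu.norm.mul_const (2 * r * C)).mono' hmeas.norm.integral_prod_right'
    (Eventually.of_forall fun y => ?_)
  simp only [norm_mul, integral_const_mul, norm_norm]
  rw [Real.norm_of_nonneg (integral_nonneg fun _ => norm_nonneg _)]
  exact mul_le_mul_of_nonneg_left (integral_norm_comp_sub_smul_le he hr.le hC
    ((subset_tsupport χ).trans hsupp) y) (norm_nonneg _)

lemma setIntegral_Ioi_fderiv_sub_smul (he : ‖e‖ = 1) {ψ : E → ℝ} (hψ : ContDiff ℝ 1 ψ)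
    (hψc : HasCompactSupport ψ) (y : E) :
    ∫ s in Ioi (0 : ℝ), fderiv ℝ ψ (y - s • e) e = ψ y := by
  have hline : ContDiff ℝ 1 fun s : ℝ => y - s • e := by fun_prop
  have hderiv (s : ℝ) : deriv (fun s : ℝ => ψ (y - s • e)) s = -fderiv ℝ ψ (y - s • e) e := by
    have h : HasDerivAt (fun s : ℝ => y - s • e) (-e) s := by
      simpa using ((hasDerivAt_id s).smul_const e).const_sub y
    simpa [Function.comp_def] using
      ((hψ.differentiable one_ne_zero (y - s • e)).hasFDerivAt.comp_hasDerivAt s h).deriv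
  have hFTC := (hψc.comp_isClosedEmbedding
    (isometry_sub_smul he y).isClosedEmbedding).integral_Ioi_deriv_eq (hψ.comp hline) 0
  simpa [Function.comp_def, hderiv, integral_neg] using hFTC

end Line

section Capacity

lemma IsWeakGrad.integral_mul_fderiv_sub {u : En n → ℝ} {g : En n → En n →L[ℝ] ℝ}
    (h : IsWeakGrad u g) {ψ : En n → ℝ} (hψ : ContDiff ℝ 1 ψ) (hψc : HasCompactSupport ψ)
    (z v : En n) :
    ∫ y, u y * fderiv ℝ ψ (y - z) v = -∫ y, ψ (y - z) * g y v := by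
  have := h (fun y => ψ (y - z)) (hψ.comp (contDiff_id.sub contDiff_const))
    (hψc.comp_homeomorph (Homeomorph.subRight z)) v
  simpa only [sub_eq_add_neg, fderiv_comp_add_right] using this

lemma IsWeakGrad.norm_integral_mul_fderiv_sub_le {u : En n → ℝ} {g : En n → En n →L[ℝ] ℝ}
    (h : IsWeakGrad u g) (hg : Integrable fun x => ‖g x‖) {ψ : En n → ℝ}
    (hψ : ContDiff ℝ 1 ψ) (hψc : HasCompactSupport ψ) (z : En n) {e : En n} (he : ‖e‖ = 1) :
    ‖∫ y, u y * fderiv ℝ ψ (y - z) e‖ ≤ ∫ y, ‖g y‖ * ‖ψ (y - z)‖ := by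
  obtain ⟨C, hC⟩ := hψc.exists_bound_of_continuous hψ.continuous
  rw [h.integral_mul_fderiv_sub hψ hψc, norm_neg]
  refine norm_integral_le_of_norm_le ?_ (Eventually.of_forall fun y => ?_)
  · exact hg.mul_bdd (c := C) (hψ.continuous.comp (by fun_prop)).norm.aestronglyMeasurable
      (Eventually.of_forall fun y => by simpa using hC (y - z))
  · rw [norm_mul, mul_comm]
    gcongr
    simpa [he] using (g y).le_opNorm e

lemma IsWeakGrad.integral_mul_le {u : En n → ℝ} {g : En n → En n →L[ℝ] ℝ}
    (h : IsWeakGrad u g) (hu : Integrable u) (hg : Integrable fun x => ‖g x‖) {ψ : En n → ℝ}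
    (hψ : ContDiff ℝ 1 ψ) (hψ1 : ∀ z, ‖ψ z‖ ≤ 1) {x : En n} {r : ℝ} (hr : 0 ≤ r)
    (hsupp : Function.support ψ ⊆ ball x r) {e : En n} (he : ‖e‖ = 1) :
    ∫ y, u y * ψ y ≤ 2 * r * ∫ y, ‖g y‖ := by
  have hψc : HasCompactSupport ψ :=
    HasCompactSupport.of_support_subset_isCompact (isCompact_closedBall x r)
      (hsupp.trans ball_subset_closedBall)
  have hdc : Continuous fun y => fderiv ℝ ψ y e :=
    (hψ.continuous_fderiv one_ne_zero).clm_apply continuous_const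
  have hi₁ := integrable_mul_comp_sub_smul he hu hdc (hψc.fderiv_apply (𝕜 := ℝ) e)
  have hi₂ := integrable_mul_comp_sub_smul he hg hψ.continuous.norm hψc.norm
  calc ∫ y, u y * ψ y
      = ∫ y, ∫ s in Ioi (0 : ℝ), u y * fderiv ℝ ψ (y - s • e) e := by
        simp_rw [integral_const_mul, setIntegral_Ioi_fderiv_sub_smul he hψ hψc]
    _ = ∫ s in Ioi (0 : ℝ), ∫ y, u y * fderiv ℝ ψ (y - s • e) e :=
        integral_integral_swap
          (hi₁.mono_measure (Measure.prod_mono le_rfl Measure.restrict_le_self))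
    _ ≤ ∫ s in Ioi (0 : ℝ), ∫ y, ‖g y‖ * ‖ψ (y - s • e)‖ :=
        (le_abs_self _).trans (norm_integral_le_of_norm_le hi₂.integral_prod_right.restrict
          (Eventually.of_forall fun s => h.norm_integral_mul_fderiv_sub_le hg hψ hψc (s • e) he))
    _ ≤ ∫ s, ∫ y, ‖g y‖ * ‖ψ (y - s • e)‖ :=
        setIntegral_le_integral hi₂.integral_prod_right
          (Eventually.of_forall fun s => integral_nonneg fun y => by positivity)
    _ = ∫ y, ∫ s, ‖g y‖ * ‖ψ (y - s • e)‖ := (integral_integral_swap hi₂).symm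
    _ ≤ ∫ y, 2 * r * ‖g y‖ := by
        refine integral_mono hi₂.integral_prod_left (hg.const_mul _) fun y => ?_
        simp only [integral_const_mul]
        rw [mul_comm]
        exact mul_le_mul_of_nonneg_right
          (by simpa using integral_norm_comp_sub_smul_le he hr hψ1 hsupp y) (norm_nonneg _)
    _ = 2 * r * ∫ y, ‖g y‖ := integral_const_mul _ _

lemma volume_isCompact_le_of_isWeakGrad {u : En n → ℝ} {g : En n → En n →L[ℝ] ℝ}
    (hn : 0 < n) (h : IsWeakGrad u g) (hu : Integrable u) (hg : Integrable fun x => ‖g x‖)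
    {V κ : Set (En n)} (hVo : IsOpen V) (hV : ∀ y ∈ V, 1 ≤ u y) {x : En n} {r : ℝ}
    (hr : 0 ≤ r) (hVr : V ⊆ ball x r) (hκ : IsCompact κ) (hκV : κ ⊆ V) :
    volume κ ≤ ENNReal.ofReal (2 * r * ∫ y, ‖g y‖) := by
  obtain ⟨ψ, hψ0, hψ1, hψI⟩ := exists_contMDiffMap_zero_one_of_isClosed (n := 1)
    (modelWithCornersSelf ℝ (En n)) hVo.isClosed_compl hκ.isClosed
    (disjoint_compl_left_iff_subset.2 hκV)
  have hψd : ContDiff ℝ 1 ψ := ψ.contMDiff.contDiff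
  have hψn : ∀ z, ‖ψ z‖ ≤ 1 := fun z => by
    simpa [abs_of_nonneg (hψI z).1] using (hψI z).2
  have hsupp : Function.support ψ ⊆ ball x r := fun z hz => hVr (by_contra fun hzV => hz (hψ0 hzV))
  have hi : Integrable fun y => u y * ψ y :=
    hu.mul_bdd hψd.continuous.aestronglyMeasurable (Eventually.of_forall hψn)
  have hnn : ∀ y, 0 ≤ u y * ψ y := fun y => by
    by_cases hy : y ∈ V
    · exact mul_nonneg (zero_le_one.trans (hV y hy)) (hψI y).1
    · simp [hψ0 (mem_compl hy)]
  refine (ENNReal.le_ofReal_iff_toReal_le hκ.measure_ne_top (by positivity)).2 ?_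
  calc volume.real κ ≤ volume.real {y | 1 ≤ u y * ψ y} :=
        measureReal_mono (fun y hy => by simpa [hψ1 hy] using hV y (hκV hy))
          (hi.measure_ge_lt_top one_pos).ne
    _ ≤ ∫ y, u y * ψ y := by
        simpa using mul_meas_ge_le_integral_of_nonneg (Eventually.of_forall hnn) hi 1
    _ ≤ 2 * r * ∫ y, ‖g y‖ :=
        h.integral_mul_le hu hg hψd hψn hr hsupp
          (e := EuclideanSpace.single ⟨0, hn⟩ 1) (by simp)

lemma volume_le_cap1 (hn : 0 < n) {A : Set (En n)} {x : En n} {r : ℝ} (hr : 0 < r)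
    (hA : A ⊆ ball x r) : volume A ≤ ENNReal.ofReal (2 * r) * cap1 A := by
  rw [mul_comm, ← ENNReal.div_le_iff (by simpa using hr) ofReal_ne_top]
  refine le_sInf ?_
  rintro c ⟨u, g, hu, hg, h, ⟨V, hVo, hAV, hV⟩, rfl⟩
  rw [ENNReal.div_le_iff (by simpa using hr) ofReal_ne_top]
  have hWo : IsOpen (V ∩ ball x r) := hVo.inter isOpen_ball
  calc volume A ≤ volume (V ∩ ball x r) := measure_mono (subset_inter hAV hA)
    _ ≤ ENNReal.ofReal (2 * r * ∫ y, ‖g y‖) := by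
        rw [hWo.measure_eq_iSup_isCompact]
        exact iSup_le fun κ => iSup_le fun hκW => iSup_le fun hκ =>
          volume_isCompact_le_of_isWeakGrad hn h hu hg hWo (fun y hy => hV y hy.1) hr.le
            inter_subset_right hκ hκW
    _ ≤ ENNReal.ofReal (((∫ y, |u y|) + ∫ y, ‖g y‖) * (2 * r)) := by
        rw [mul_comm (2 * r)]
        gcongr
        exact le_add_of_nonneg_left (integral_nonneg fun _ => abs_nonneg _)
    _ = _ := ENNReal.ofReal_mul (by positivity)

lemma volume_ball_mul (x y : En n) {c : ℝ} (hc : 0 < c) (r : ℝ) :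
    volume (ball x (c * r)) = ENNReal.ofReal c ^ n * volume (ball y r) := by
  rw [Measure.addHaar_ball_mul_of_pos volume x hc, ← ENNReal.ofReal_pow hc.le,
    Measure.addHaar_ball_center volume y]
  simp

lemma FinelyOpen1.eventually_volume_compl_lt (hn : 0 < n) {U : Set (En n)} (hU : FinelyOpen1 U)
    {x : En n} (hx : x ∈ U) {θ : ℝ≥0∞} (hθ : θ ≠ 0) :
    ∀ᶠ r in 𝓝[>] (0 : ℝ), volume (Uᶜ ∩ ball x r) < θ * volume (ball x r) := by
  set ω : ℝ≥0∞ := volume (ball (0 : En n) 1)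
  have hω : ω ≠ 0 := (measure_ball_pos volume _ one_pos).ne'
  have hpos : 0 < θ * ω / 2 := ENNReal.div_pos (mul_ne_zero hθ hω) (by simp)
  filter_upwards [(hU x hx).eventually_lt_const hpos, self_mem_nhdsWithin] with r hr hr0
  replace hr0 : 0 < r := hr0
  have hp : ENNReal.ofReal (r ^ (n - 1)) ≠ 0 := by simpa using pow_pos hr0 (n - 1)
  rw [ENNReal.div_lt_iff (Or.inl hp) (Or.inl ofReal_ne_top)] at hr
  have hball : volume (ball x r) = ENNReal.ofReal r * ENNReal.ofReal (r ^ (n - 1)) * ω := by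
    rw [← ENNReal.ofReal_mul hr0.le, mul_pow_sub_one hn.ne', ENNReal.ofReal_pow hr0.le]
    simpa using volume_ball_mul x 0 hr0 1
  calc volume (Uᶜ ∩ ball x r) ≤ ENNReal.ofReal (2 * r) * cap1 (Uᶜ ∩ ball x r) :=
        volume_le_cap1 hn hr0 inter_subset_right
    _ < ENNReal.ofReal (2 * r) * (θ * ω / 2 * ENNReal.ofReal (r ^ (n - 1))) :=
        ENNReal.mul_lt_mul_right (by simpa using hr0) ofReal_ne_top hr
    _ = 2 * 2⁻¹ * (θ * (ENNReal.ofReal r * ENNReal.ofReal (r ^ (n - 1)) * ω)) := by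
        rw [ENNReal.ofReal_mul zero_le_two, ENNReal.ofReal_ofNat, div_eq_mul_inv]
        ring
    _ = θ * volume (ball x r) := by
        rw [ENNReal.mul_inv_cancel two_ne_zero ofNat_ne_top, one_mul, hball]

end Capacity

section OscillationControl

lemma exists_nat_cover_of_eventually {X : Type*} [PseudoMetricSpace X]
    [TopologicalSpace.SeparableSpace X] [Nonempty X] (P : X → ℝ → Prop) :
    ∃ A : ℕ → Set X, (∀ x, (∀ᶠ r in 𝓝[>] (0 : ℝ), P x r) → ∃ k, x ∈ A k) ∧
      ∀ k, ∀ x ∈ A k, ∀ y ∈ A k, ∀ r, 0 < r → r ≤ 4 * dist x y → P x r := by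
  refine ⟨fun k => {x | ∀ r : ℝ, 0 < r → r < 1 / ((k.unpair.1 : ℝ) + 1) → P x r} ∩
    ball (TopologicalSpace.denseSeq X k.unpair.2) (1 / ((k.unpair.1 : ℝ) + 1) / 8),
    fun x hx => ?_, fun k x hx y hy r hr hrd => ?_⟩
  · obtain ⟨δ, hδ, hP⟩ := mem_nhdsGT_iff_exists_Ioo_subset.1 hx
    obtain ⟨m, hm⟩ := exists_nat_one_div_lt (mem_Ioi.1 hδ)
    obtain ⟨i, hi⟩ := (TopologicalSpace.denseRange_denseSeq X).exists_dist_lt x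
      (by positivity : (0 : ℝ) < 1 / (m + 1) / 8)
    refine ⟨Nat.pair m i, ?_⟩
    simp only [Nat.unpair_pair]
    exact ⟨fun r hr hrm => hP ⟨hr, hrm.trans hm⟩, hi⟩
  · have hxy := dist_triangle_right x y (TopologicalSpace.denseSeq X k.unpair.2)
    exact hx.1 r hr (by linarith [mem_ball.1 hx.2, mem_ball.1 hy.2])

variable {X Y Z : Type*} [PseudoMetricSpace X] [MeasurableSpace X] [PseudoEMetricSpace Y]
  [PseudoEMetricSpace Z] {d : ℕ} {μ ν : Measure X} {C : ℝ≥0∞} {f : X → Y} {s : Set X}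

/-- On the set `s`, the `d`-th power of the oscillation of `f` between two points is controlled by
the `μ`-measure of a comparable ball. For a quasiconformal map, `d` is the dimension and `μ` is the
pull-back of Lebesgue measure; the factor `4` leaves room for an intermediate point. -/
def OscControlledOn (d : ℕ) (μ : Measure X) (C : ℝ≥0∞) (f : X → Y) (s : Set X) : Prop :=
  ∀ x ∈ s, ∀ y ∈ s, edist (f x) (f y) ^ d ≤ C * μ (closedBall x (4 * dist x y))

/-- The space is a countable union of sets on each of which the oscillation of `f` is controlled
by `μ`. -/
def OscControlled (d : ℕ) (μ : Measure X) (C : ℝ≥0∞) (f : X → Y) : Prop :=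
  ∃ G : ℕ → Set X, ⋃ k, G k = univ ∧ ∀ k, OscControlledOn d μ C f (G k)

lemma OscControlledOn.mono_measure (h : OscControlledOn d μ C f s) (hμν : μ ≤ ν) :
    OscControlledOn d ν C f s := fun x hx y hy =>
  (h x hx y hy).trans (by gcongr)

lemma OscControlled.mono_measure (h : OscControlled d μ C f) (hμν : μ ≤ ν) :
    OscControlled d ν C f :=
  let ⟨G, hG, hC⟩ := h
  ⟨G, hG, fun k => (hC k).mono_measure hμν⟩

lemma OscControlled.comp_lipschitzWith (h : OscControlled d μ C f) {p : Y → Z}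
    (hp : LipschitzWith 1 p) : OscControlled d μ C (p ∘ f) :=
  let ⟨G, hG, hC⟩ := h
  ⟨G, hG, fun k x hx y hy =>
    (pow_le_pow_left' (by simpa using hp (f x) (f y)) d).trans (hC k x hx y hy)⟩

end OscillationControl

section DensityDilatation

/-- The variant of `Kfine` in which fine openness is relaxed to a lower bound for the volume
density at `x`: the complement of `U` eventually fills less than the fraction `θ` of `B(x, r)`. -/
def Kdensity (θ : ℝ≥0∞) (f : En n → En n) (x : En n) : ℝ≥0∞ :=
  ⨅ (U : Set (En n)) (_ : x ∈ U)
    (_ : ∀ᶠ r in 𝓝[>] (0 : ℝ), volume (Uᶜ ∩ ball x r) < θ * volume (ball x r)),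
    limsup (fun r => KfU f U x r) (𝓝[>] 0)

lemma Kdensity_le_Kfine (hn : 0 < n) {θ : ℝ≥0∞} (hθ : θ ≠ 0) (f : En n → En n) (x : En n) :
    Kdensity θ f x ≤ Kfine f x :=
  le_iInf₂ fun U hU => le_iInf fun hxU =>
    iInf₂_le_of_le U hxU (iInf_le _ (hU.eventually_volume_compl_lt hn hxU hθ))

lemma eventually_ediam_pow_le_of_limsup_KfU_lt (hn : 2 ≤ n) {f : En n → En n} (hf : Continuous f)
    {U : Set (En n)} {x : En n} {L : ℝ≥0∞}
    (h : limsup (fun r => KfU f U x r) (𝓝[>] 0) < L) :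
    ∀ᶠ r in 𝓝[>] (0 : ℝ),
      ediam (f '' (ball x r ∩ U)) ^ n ≤ L ^ ((n : ℝ) - 1) * volume (f '' ball x r) := by
  have hn1 : 0 < (n : ℝ) - 1 := by
    have : (2 : ℝ) ≤ n := mod_cast hn
    linarith
  filter_upwards [eventually_lt_of_limsup_lt h] with r hr
  unfold KfU at hr
  split_ifs at hr with h0
  · exact absurd hr not_top_lt
  · have hfin : volume (f '' ball x r) ≠ ∞ :=
      (((isCompact_closedBall x r).image hf).measure_lt_top.trans_le'
        (measure_mono (image_mono ball_subset_closedBall))).ne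
    have hpow := ENNReal.rpow_le_rpow hr.le hn1.le
    rw [← ENNReal.rpow_mul, inv_mul_cancel₀ hn1.ne', ENNReal.rpow_one] at hpow
    exact (ENNReal.div_le_iff h0 hfin).1 hpow

/-- `f` has oscillation controlled by image volume on the trace in `B(x, r)` of a set `U ∋ x`
whose complement fills less than the fraction `θ` of that ball. -/
def IsGoodRadius (θ Q : ℝ≥0∞) (f : En n → En n) (U : Set (En n)) (x : En n) (r : ℝ) : Prop :=
  volume (Uᶜ ∩ ball x r) < θ * volume (ball x r) ∧
    ediam (f '' (ball x r ∩ U)) ^ n ≤ Q * volume (f '' ball x r)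

lemma exists_eventually_isGoodRadius (hn : 2 ≤ n) {f : En n → En n} (hf : Continuous f)
    {θ L : ℝ≥0∞} {x : En n} (h : Kdensity θ f x < L) :
    ∃ U, x ∈ U ∧ ∀ᶠ r in 𝓝[>] (0 : ℝ), IsGoodRadius θ (L ^ ((n : ℝ) - 1)) f U x r := by
  simp only [Kdensity, iInf_lt_iff] at h
  obtain ⟨U, hxU, hU, hlim⟩ := h
  exact ⟨U, hxU, hU.and (eventually_ediam_pow_le_of_limsup_KfU_lt hn hf hlim)⟩

/-- The fraction `(1 + 2ⁿ)⁻¹` makes the two complements just too small to cover `B(y, r)` together,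
since `B(x, 2 r)` has `2ⁿ` times its volume. -/
lemma inter_nonempty_of_volume_compl_lt {U W : Set (En n)} {x y : En n} {r : ℝ}
    (hsub : ball y r ⊆ ball x (2 * r))
    (hU : volume (Uᶜ ∩ ball x (2 * r)) < (1 + 2 ^ n)⁻¹ * volume (ball x (2 * r)))
    (hW : volume (Wᶜ ∩ ball y r) < (1 + 2 ^ n)⁻¹ * volume (ball y r)) :
    (ball y r ∩ (U ∩ W)).Nonempty := by
  by_contra hemp
  have hcover : ball y r ⊆ (Wᶜ ∩ ball y r) ∪ (Uᶜ ∩ ball x (2 * r)) := fun z hz => by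
    by_cases hzU : z ∈ U
    · exact Or.inl ⟨fun hzW => hemp ⟨z, hz, hzU, hzW⟩, hz⟩
    · exact Or.inr ⟨hzU, hsub hz⟩
  refine (lt_irrefl (volume (ball y r))) ?_
  calc volume (ball y r) ≤ volume (Wᶜ ∩ ball y r) + volume (Uᶜ ∩ ball x (2 * r)) :=
        (measure_mono hcover).trans (measure_union_le _ _)
    _ < (1 + 2 ^ n)⁻¹ * volume (ball y r) + (1 + 2 ^ n)⁻¹ * volume (ball x (2 * r)) :=
        ENNReal.add_lt_add hW hU
    _ = (1 + 2 ^ n)⁻¹ * (1 + 2 ^ n) * volume (ball y r) := by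
        rw [volume_ball_mul x y two_pos, ofReal_ofNat]
        ring
    _ = volume (ball y r) := by
        rw [ENNReal.inv_mul_cancel (by simp) (by finiteness), one_mul]

lemma edist_pow_le_of_isGoodRadius {f : En n → En n} {Q : ℝ≥0∞} {U W : Set (En n)} {x y : En n}
    {r : ℝ} (hxy : dist x y < r) (hxU : x ∈ U) (hyW : y ∈ W)
    (hU : IsGoodRadius (1 + 2 ^ n)⁻¹ Q f U x (2 * r))
    (hW : IsGoodRadius (1 + 2 ^ n)⁻¹ Q f W y r) :
    edist (f x) (f y) ^ n ≤ 2 ^ n * Q * volume (f '' ball x (2 * r)) := by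
  have hr : 0 < r := dist_nonneg.trans_lt hxy
  have hsub : ball y r ⊆ ball x (2 * r) := ball_subset_ball' (by rw [dist_comm]; linarith)
  obtain ⟨z, hz, hzU, hzW⟩ := inter_nonempty_of_volume_compl_lt hsub hU.1 hW.1
  set a := ediam (f '' (ball x (2 * r) ∩ U))
  set b := ediam (f '' (ball y r ∩ W))
  have hxz : edist (f x) (f z) ≤ a :=
    edist_le_ediam_of_mem (mem_image_of_mem f ⟨mem_ball_self (by linarith), hxU⟩)
      (mem_image_of_mem f ⟨hsub hz, hzU⟩)
  have hzy : edist (f z) (f y) ≤ b :=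
    edist_le_ediam_of_mem (mem_image_of_mem f ⟨hz, hzW⟩)
      (mem_image_of_mem f ⟨mem_ball_self hr, hyW⟩)
  have hb : b ^ n ≤ Q * volume (f '' ball x (2 * r)) := hW.2.trans (by gcongr)
  calc edist (f x) (f y) ^ n ≤ (2 * max a b) ^ n := by
        gcongr
        rw [two_mul]
        exact (edist_triangle _ (f z) _).trans
          (add_le_add (hxz.trans (le_max_left _ _)) (hzy.trans (le_max_right _ _)))
    _ ≤ 2 ^ n * (Q * volume (f '' ball x (2 * r))) := by
        rw [mul_pow]
        gcongr
        rcases max_choice a b with h | h <;> rw [h]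
        exacts [hU.2, hb]
    _ = _ := (mul_assoc _ _ _).symm

theorem oscControlled_of_Kdensity_lt (hn : 2 ≤ n) {f : En n → En n} (hf : IsHomeomorph f)
    {L : ℝ≥0∞} (h : ∀ x, Kdensity (1 + 2 ^ n)⁻¹ f x < L) :
    OscControlled n (volume.comap f) (2 ^ n * L ^ ((n : ℝ) - 1)) f := by
  choose U hxU hU using fun x => exists_eventually_isGoodRadius hn hf.continuous (h x)
  obtain ⟨G, hcover, hG⟩ := exists_nat_cover_of_eventually fun x =>
    IsGoodRadius (1 + 2 ^ n)⁻¹ (L ^ ((n : ℝ) - 1)) f (U x) x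
  refine ⟨G, eq_univ_of_forall fun x => mem_iUnion.2 (hcover x (hU x)), fun k x hx y hy => ?_⟩
  rcases (dist_nonneg (x := x) (y := y)).eq_or_lt with hxy | hxy
  · rw [eq_comm, dist_eq_zero] at hxy
    simp [hxy, show n ≠ 0 by omega]
  · rw [hf.isClosedEmbedding.measurableEmbedding.comap_apply]
    calc edist (f x) (f y) ^ n
        ≤ 2 ^ n * L ^ ((n : ℝ) - 1) * volume (f '' ball x (2 * (2 * dist x y))) :=
          edist_pow_le_of_isGoodRadius (by linarith) (hxU x) (hxU y)
            (hG k x hx y hy _ (by linarith) (by linarith))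
            (hG k y hy x hx _ (by linarith) (by rw [dist_comm y]; linarith))
      _ ≤ _ := by
          gcongr
          exact ball_subset_closedBall.trans (closedBall_subset_closedBall (by linarith))

end DensityDilatation

section LipschitzDecomposition

/-- Up to a `ν`-null set, the domain of `f` is partitioned into countably many measurable pieces on
each of which `f` is Lipschitz, with a constant `const j` depending on the piece. -/
structure LipschitzDecomposition {X Y : Type*} [MeasurableSpace X] [PseudoEMetricSpace X]
    [PseudoEMetricSpace Y] (ν : Measure X) (f : X → Y) where
  piece : ℕ → Set X
  const : ℕ → ℝ≥0
  measurableSet_piece : ∀ j, MeasurableSet (piece j)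
  pairwise_disjoint_piece : Pairwise (Function.onFun Disjoint piece)
  ae_mem_piece : ∀ᵐ x ∂ν, ∃ j, x ∈ piece j
  lipschitzOnWith_piece : ∀ j, LipschitzOnWith (const j) f (piece j)

namespace LipschitzDecomposition

section Basic

variable {X Y : Type*} [MeasurableSpace X] [PseudoEMetricSpace X] [PseudoEMetricSpace Y]
  {ν : Measure X} {f : X → Y}

lemma exists_of_cover {ι : Type*} [Countable ι] [Nonempty ι] {B : ι → Set X} {c : ι → ℝ≥0}
    (hB : ∀ i, MeasurableSet (B i)) (hae : ∀ᵐ x ∂ν, ∃ i, x ∈ B i)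
    (hlip : ∀ i, LipschitzOnWith (c i) f (B i)) :
    ∃ D : LipschitzDecomposition ν f, ∀ j, ∃ i, D.const j = c i ∧ D.piece j ⊆ B i := by
  obtain ⟨e, he⟩ := exists_surjective_nat ι
  refine ⟨⟨disjointed (B ∘ e), c ∘ e, fun j => MeasurableSet.disjointed (fun _ => hB _) j,
    disjoint_disjointed _, ?_, fun j => (hlip (e j)).mono (disjointed_subset _ j)⟩,
    fun j => ⟨e j, rfl, disjointed_subset _ j⟩⟩
  filter_upwards [hae] with x ⟨i, hi⟩
  obtain ⟨k, rfl⟩ := he i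
  exact mem_iUnion.1 ((iUnion_disjointed (f := B ∘ e)).symm ▸ mem_iUnion.2 ⟨k, hi⟩)

lemma measure_compl_iUnion_piece (D : LipschitzDecomposition ν f) :
    ν (⋃ j, D.piece j)ᶜ = 0 := by
  simpa only [measure_eq_zero_iff_ae_notMem, notMem_compl_iff, mem_iUnion] using D.ae_mem_piece

lemma setLIntegral_eq_tsum (D : LipschitzDecomposition ν f) {s : Set X} (hs : MeasurableSet s)
    (h : X → ℝ≥0∞) : ∫⁻ x in s, h x ∂ν = ∑' j, ∫⁻ x in s ∩ D.piece j, h x ∂ν := by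
  rw [← lintegral_iUnion (fun j => hs.inter (D.measurableSet_piece j))
    fun i j hij => (D.pairwise_disjoint_piece hij).mono inter_subset_right inter_subset_right,
    ← inter_iUnion]
  refine setLIntegral_congr ?_
  filter_upwards [D.ae_mem_piece] with x hx
  exact propext ⟨fun h => ⟨h, mem_iUnion.2 hx⟩, fun h => h.1⟩

/-- Discard a null set from every piece. -/
def sdiff (D : LipschitzDecomposition ν f) {N : Set X} (hN : MeasurableSet N)
    (hN₀ : ∀ᵐ x ∂ν, x ∉ N) : LipschitzDecomposition ν f where
  piece j := D.piece j \ N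
  const := D.const
  measurableSet_piece j := (D.measurableSet_piece j).diff hN
  pairwise_disjoint_piece _ _ hij :=
    (D.pairwise_disjoint_piece hij).mono sdiff_subset sdiff_subset
  ae_mem_piece := by
    filter_upwards [D.ae_mem_piece, hN₀] with x ⟨j, hj⟩ hxN using ⟨j, hj, hxN⟩
  lipschitzOnWith_piece j := (D.lipschitzOnWith_piece j).mono sdiff_subset

end Basic

section Derivative

variable {E F : Type*} [NormedAddCommGroup E] [NormedSpace ℝ E] [FiniteDimensional ℝ E]
  [MeasurableSpace E] [BorelSpace E] [NormedAddCommGroup F] [NormedSpace ℝ F] {ν : Measure E}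

/-- `g` is a derivative of `f` along each piece. -/
def IsDeriv {f : E → F} (D : LipschitzDecomposition ν f) (g : E → E →L[ℝ] F) : Prop :=
  ∀ j, ∀ x ∈ D.piece j, HasFDerivWithinAt f (g x) (D.piece j) x

variable [ν.IsAddHaarMeasure]

theorem exists_isDeriv [FiniteDimensional ℝ F]
    {f : E → F} (D : LipschitzDecomposition ν f) :
    ∃ (D' : LipschitzDecomposition ν f) (g : E → E →L[ℝ] F), Measurable g ∧
      D'.const = D.const ∧ (∀ j, D'.piece j ⊆ D.piece j) ∧ D'.IsDeriv g := by
  choose F' hF' hfF' using fun j => (D.lipschitzOnWith_piece j).extend_finite_dimension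
  obtain ⟨g, hg, hgF'⟩ := exists_measurable_piecewise D.piece D.measurableSet_piece
    (fun j => fderiv ℝ (F' j)) (fun j => measurable_fderiv ℝ (F' j))
    (fun i j hij x hx => absurd hx.2 (disjoint_left.1 (D.pairwise_disjoint_piece hij) hx.1))
  set N := toMeasurable ν {x | ¬ ∀ j, DifferentiableAt ℝ (F' j) x}
  have hN : ∀ᵐ x ∂ν, x ∉ N := measure_eq_zero_iff_ae_notMem.1 <| by
    rw [measure_toMeasurable]
    exact ae_all_iff.2 fun j => (hF' j).ae_differentiableAt
  refine ⟨D.sdiff (measurableSet_toMeasurable _ _) hN, g, hg, rfl, fun j => sdiff_subset,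
    fun j x hx => ?_⟩
  have hdiff : ∀ j, DifferentiableAt ℝ (F' j) x :=
    not_not.1 fun h => hx.2 (subset_toMeasurable ν _ h)
  rw [hgF' j hx.1]
  exact ((hdiff j).hasFDerivAt.hasFDerivWithinAt.congr (hfF' j) (hfF' j hx.1)).mono sdiff_subset

lemma IsDeriv.ae_nnnorm_le {f : E → E} {D : LipschitzDecomposition ν f} {g : E → E →L[ℝ] E}
    (hg : D.IsDeriv g) (D' : LipschitzDecomposition ν f) :
    ∀ᵐ x ∂ν, ∀ k, x ∈ D'.piece k → ‖g x‖₊ ≤ D'.const k := by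
  have hpair (j k : ℕ) : ∀ᵐ x ∂ν, x ∈ D.piece j ∩ D'.piece k → ‖g x‖₊ ≤ D'.const k := by
    have hm := (D.measurableSet_piece j).inter (D'.measurableSet_piece k)
    have happrox : ApproximatesLinearOn f (0 : E →L[ℝ] E) (D.piece j ∩ D'.piece k)
        (D'.const k) := fun x hx y hy => by
      simpa using (D'.lipschitzOnWith_piece k).norm_sub_le hx.2 hy.2
    simpa [ae_restrict_iff' hm] using happrox.norm_fderiv_sub_le ν hm g
      fun x hx => (hg j x hx.1).mono inter_subset_left
  filter_upwards [D.ae_mem_piece, ae_all_iff.2 fun j => ae_all_iff.2 (hpair j)]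
    with x ⟨j, hj⟩ hx k hk using hx j k ⟨hj, hk⟩

theorem IsDeriv.rnDeriv_comap_le {f : E → E} {D : LipschitzDecomposition ν f}
    {g : E → E →L[ℝ] E} (hg : D.IsDeriv g) (hf : MeasurableEmbedding f) :
    ∀ᵐ x ∂ν, (ν.comap f).rnDeriv ν x ≤ ENNReal.ofReal |(g x).det| := by
  refine ae_le_of_forall_setLIntegral_le_of_sigmaFinite (Measure.measurable_rnDeriv _ _)
    fun s hs _ => ?_
  rw [D.setLIntegral_eq_tsum hs, D.setLIntegral_eq_tsum hs]
  refine ENNReal.tsum_le_tsum fun j => ?_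
  rw [lintegral_abs_det_fderiv_eq_addHaar_image ν (hs.inter (D.measurableSet_piece j))
    (fun x hx => (hg j x hx.2).mono inter_subset_right) hf.injective.injOn, ← hf.comap_apply]
  exact Measure.setLIntegral_rnDeriv_le _

end Derivative

end LipschitzDecomposition

lemma exists_nat_mul_mem_Ioc {ε ρ : ℝ≥0∞} (hε : ε ≠ 0) (hρ : ρ ≠ ∞) :
    ∃ i : ℕ, ρ < (i + 1) * ε ∧ (i + 1) * ε ≤ ρ + ε := by
  classical
  have hex : ∃ i : ℕ, ρ < (i + 1) * ε := by
    obtain ⟨m, hm⟩ := ENNReal.exists_nat_mul_gt hε hρ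
    exact ⟨m, hm.trans_le (by gcongr; exact le_self_add)⟩
  refine ⟨Nat.find hex, Nat.find_spec hex, ?_⟩
  rw [add_mul, one_mul]
  gcongr
  rcases h : Nat.find hex with _ | j
  · simp
  · simpa using Nat.find_min hex (m := j) (by omega)

lemma exists_nnreal_pow_eq {d : ℕ} (hd : d ≠ 0) {a : ℝ≥0∞} (ha : a ≠ ∞) :
    ∃ c : ℝ≥0, (c : ℝ≥0∞) ^ d = a := by
  lift a to ℝ≥0 using ha
  exact ⟨a ^ ((d : ℝ)⁻¹), by rw [← ENNReal.coe_pow, NNReal.rpow_inv_natCast_pow a hd]⟩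

section Existence

variable {E Y : Type*} [NormedAddCommGroup E] [NormedSpace ℝ E] [FiniteDimensional ℝ E]
  [MeasurableSpace E] [BorelSpace E] [PseudoEMetricSpace Y] {ν μ : Measure E}
  [ν.IsAddHaarMeasure] {d : ℕ} {C : ℝ≥0∞} {f : E → Y}

lemma OscControlledOn.lipschitzOnWith {A s : Set E} (h : OscControlledOn d μ C f s) (hA : A ⊆ s)
    (hd : Module.finrank ℝ E = d) (hd0 : d ≠ 0) {a : ℝ≥0∞} {c : ℝ≥0}
    (hc : (c : ℝ≥0∞) ^ d = C * (4 ^ d * ν (ball 0 1)) * a)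
    (hμ : ∀ x ∈ A, ∀ y ∈ A, x ≠ y →
      μ (closedBall x (4 * dist x y)) ≤ a * ν (closedBall x (4 * dist x y))) :
    LipschitzOnWith c f A := by
  intro x hx y hy
  rcases eq_or_ne x y with rfl | hxy
  · simp
  rw [← ENNReal.pow_le_pow_left_iff hd0, mul_pow, hc]
  calc edist (f x) (f y) ^ d ≤ C * μ (closedBall x (4 * dist x y)) := h x (hA hx) y (hA hy)
    _ ≤ C * (a * ν (closedBall x (4 * dist x y))) := by gcongr; exact hμ x hx y hy hxy
    _ = C * (4 ^ d * ν (ball 0 1)) * a * edist x y ^ d := by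
        rw [Measure.addHaar_closedBall ν x (by positivity), hd, ENNReal.ofReal_pow (by positivity),
          ENNReal.ofReal_mul (by norm_num), ← edist_dist, mul_pow, ENNReal.ofReal_ofNat]
        ring

theorem OscControlled.exists_lipschitzDecomposition [IsLocallyFiniteMeasure μ]
    (h : OscControlled d μ C f) (hC : C ≠ ∞) (hf : Continuous f) (hd : Module.finrank ℝ E = d)
    (hd0 : d ≠ 0) {ε : ℝ≥0∞} (hε : ε ≠ 0) (hε' : ε ≠ ∞) :
    ∃ D : LipschitzDecomposition ν f, ∀ j, ∀ x ∈ D.piece j,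
      (D.const j : ℝ≥0∞) ^ d ≤ C * (4 ^ d * ν (ball 0 1)) * (μ.rnDeriv ν x + ε) := by
  obtain ⟨G, hGU, hG⟩ := h
  have hC' : C * (4 ^ d * ν (ball 0 1)) ≠ ∞ := by finiteness
  choose c hc using fun i : ℕ => exists_nnreal_pow_eq hd0
    (ENNReal.mul_ne_top hC' (by finiteness : ((i : ℝ≥0∞) + 1) * ε ≠ ∞))
  choose A hcover hA using fun i : ℕ => exists_nat_cover_of_eventually fun (x : E) r =>
    μ (closedBall x r) ≤ (i + 1) * ε * ν (closedBall x r)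
  let S (i : ℕ) : Set E :=
    {x | μ.rnDeriv ν x < (i + 1) * ε} ∩ {x | (i + 1) * ε ≤ μ.rnDeriv ν x + ε}
  have hρ : Measurable (μ.rnDeriv ν) := Measure.measurable_rnDeriv _ _
  -- The Lipschitz bound survives the closure, which makes the pieces measurable.
  let B (p : ℕ × ℕ × ℕ) : Set E := closure (G p.1 ∩ A p.2.1 p.2.2) ∩ S p.2.1
  have hB (p) : MeasurableSet (B p) :=
    isClosed_closure.measurableSet.inter ((measurableSet_lt hρ measurable_const).inter
      (measurableSet_le measurable_const (hρ.add_const ε)))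
  have hlip (p) : LipschitzOnWith (c p.2.1) f (B p) :=
    (((hG p.1).lipschitzOnWith inter_subset_left hd hd0 (hc p.2.1) fun x hx y hy hxy =>
      hA p.2.1 p.2.2 x hx.2 y hy.2 _ (by simpa using hxy) le_rfl).closure
        hf.continuousOn).mono inter_subset_left
  have hae : ∀ᵐ x ∂ν, ∃ p, x ∈ B p := by
    filter_upwards [Measure.rnDeriv_lt_top μ ν, Besicovitch.ae_tendsto_rnDeriv μ ν]
      with x hx hlim
    obtain ⟨i, hlt, hle⟩ := exists_nat_mul_mem_Ioc hε hx.ne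
    obtain ⟨k, hk⟩ := mem_iUnion.1 (hGU ▸ mem_univ x)
    obtain ⟨m, hm⟩ := hcover i x <| by
      filter_upwards [hlim.eventually_lt_const hlt, self_mem_nhdsWithin] with r hr hr0
      exact (ENNReal.div_le_iff (measure_closedBall_pos ν x hr0).ne'
        measure_closedBall_lt_top.ne).1 hr.le
    exact ⟨(k, i, m), subset_closure ⟨hk, hm⟩, hlt, hle⟩
  obtain ⟨D, hD⟩ := LipschitzDecomposition.exists_of_cover hB hae hlip
  refine ⟨D, fun j x hx => ?_⟩
  obtain ⟨p, hp, hsub⟩ := hD j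
  rw [hp, hc]
  gcongr
  exact (hsub hx).2.2

theorem OscControlled.ae_enorm_pow_le [IsLocallyFiniteMeasure μ] {f : E → E}
    (h : OscControlled d μ C f) (hC : C ≠ ∞) (hf : Continuous f) (hd : Module.finrank ℝ E = d)
    (hd0 : d ≠ 0) {D : LipschitzDecomposition ν f} {g : E → E →L[ℝ] E} (hg : D.IsDeriv g) :
    ∀ᵐ x ∂ν, ‖g x‖ₑ ^ d ≤ C * (4 ^ d * ν (ball 0 1)) * μ.rnDeriv ν x := by
  set C' := C * (4 ^ d * ν (ball 0 1))
  have hC' : C' ≠ ∞ := by finiteness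
  have happrox (m : ℕ) : ∀ᵐ x ∂ν, ‖g x‖ₑ ^ d ≤ C' * (μ.rnDeriv ν x + (m + 1 : ℝ≥0∞)⁻¹) := by
    obtain ⟨D', hD'⟩ := h.exists_lipschitzDecomposition (ν := ν) hC hf hd hd0
      (ε := (m + 1 : ℝ≥0∞)⁻¹) (by simp) (by simp)
    filter_upwards [D'.ae_mem_piece, hg.ae_nnnorm_le D'] with x ⟨k, hk⟩ hx
    exact (pow_le_pow_left' (ENNReal.coe_le_coe.2 (hx k hk)) d).trans (hD' k x hk)
  filter_upwards [ae_all_iff.2 happrox] with x hx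
  have hlim : Tendsto (fun m : ℕ => C' * (μ.rnDeriv ν x + (m + 1 : ℝ≥0∞)⁻¹)) atTop
      (𝓝 (C' * (μ.rnDeriv ν x + 0))) := by
    refine ENNReal.Tendsto.const_mul (tendsto_const_nhds.add ?_) (Or.inr hC')
    simpa using (tendsto_add_atTop_iff_nat 1).2 ENNReal.tendsto_inv_nat_nhds_zero
  rw [add_zero] at hlim
  exact ge_of_tendsto' hlim hx

end Existence

end LipschitzDecomposition

section LusinOnLines

section DoublingBalls

variable {E : Type*} [NormedAddCommGroup E] [NormedSpace ℝ E] [FiniteDimensional ℝ E]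
  [MeasurableSpace E] [BorelSpace E] {ν μ : Measure E} [ν.IsAddHaarMeasure]
  [IsLocallyFiniteMeasure μ]

lemma exists_measure_closedBall_mul_le (hμ : ν ≤ μ) (x : E) {Λ δ : ℝ} (hΛ : 1 ≤ Λ) (hδ : 0 < δ) :
    ∃ r, 0 < r ∧ r < δ ∧ μ (closedBall x (Λ * r)) ≤
      2 * ENNReal.ofReal (Λ ^ Module.finrank ℝ E) * μ (closedBall x r) := by
  -- Otherwise `μ` would decay at `x` faster than `ν`, contradicting `ν ≤ μ`.
  have hΛ0 : 0 < Λ := by positivity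
  by_contra! H
  set ρ := δ / 2
  have hρ : 0 < ρ := by positivity
  set a := ENNReal.ofReal (Λ ^ Module.finrank ℝ E)
  have hμm (m : ℕ) : (2 * a) ^ m * μ (closedBall x (ρ / Λ ^ m)) ≤ μ (closedBall x ρ) := by
    induction m with
    | zero => simp
    | succ m ih =>
      have hlt : ρ / Λ ^ (m + 1) < δ :=
        (div_le_self hρ.le (one_le_pow₀ hΛ)).trans_lt (half_lt_self hδ)
      have hstep := (H (ρ / Λ ^ (m + 1)) (by positivity) hlt).le
      rw [show Λ * (ρ / Λ ^ (m + 1)) = ρ / Λ ^ m by field_simp; ring] at hstep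
      rw [pow_succ, mul_assoc]
      exact le_trans (by gcongr) ih
  have hνm (m : ℕ) : ν (closedBall x ρ) = a ^ m * ν (closedBall x (ρ / Λ ^ m)) := by
    conv_lhs => rw [← mul_div_cancel₀ ρ (pow_pos hΛ0 m).ne']
    rw [Measure.addHaar_closedBall_mul ν x (by positivity) (by positivity),
      Measure.addHaar_closedBall_center ν x, ← ENNReal.ofReal_pow (by positivity), pow_right_comm]
  have hgrowth (m : ℕ) : (2 : ℝ≥0∞) ^ m * ν (closedBall x ρ) ≤ μ (closedBall x ρ) := by
    rw [hνm m, ← mul_assoc, ← mul_pow]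
    exact le_trans (by gcongr) (hμm m)
  obtain ⟨m, hm⟩ := ENNReal.exists_nat_mul_gt (measure_closedBall_pos ν x hρ).ne'
    (measure_closedBall_lt_top (μ := μ) (x := x) (r := ρ)).ne
  refine (hm.trans_le (le_trans ?_ (hgrowth m))).false
  gcongr
  exact_mod_cast Nat.lt_two_pow_self.le

lemma exists_disjoint_doubling_closedBall (hμ : ν ≤ μ) {A O : Set E} (hO : IsOpen O) (hAO : A ⊆ O)
    {Λ : ℝ} (hΛ : 1 ≤ Λ) :
    ∃ (J : Set E) (r : E → ℝ), J.Countable ∧ J ⊆ A ∧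
      (J.PairwiseDisjoint fun c => closedBall c (r c)) ∧
      (∀ c ∈ J, 0 < r c ∧ closedBall c (r c) ⊆ O ∧ μ (closedBall c (Λ * r c)) ≤
        2 * ENNReal.ofReal (Λ ^ Module.finrank ℝ E) * μ (closedBall c (r c))) ∧
      ∀ x ∈ A, ∃ c ∈ J, x ∈ closedBall c (5 * r c) := by
  have hradius : ∀ c ∈ A, ∃ r, 0 < r ∧ r ≤ 1 ∧ closedBall c r ⊆ O ∧ μ (closedBall c (Λ * r)) ≤
      2 * ENNReal.ofReal (Λ ^ Module.finrank ℝ E) * μ (closedBall c r) := fun c hc => by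
    obtain ⟨ρ, hρ, hρO⟩ := Metric.isOpen_iff.1 hO c (hAO hc)
    obtain ⟨r, hr, hrρ, hdoubling⟩ :=
      exists_measure_closedBall_mul_le hμ c hΛ (lt_min hρ one_pos)
    exact ⟨r, hr, (hrρ.trans_le (min_le_right _ _)).le,
      (closedBall_subset_ball (hrρ.trans_le (min_le_left _ _))).trans hρO, hdoubling⟩
  choose! r hr0 hr1 hrO hdoubling using hradius
  obtain ⟨J, hJA, hdisj, hcover⟩ :=
    Vitali.exists_disjoint_subfamily_covering_enlargement_closedBall A id r 1 hr1 5 (by norm_num)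
  refine ⟨J, r, hdisj.countable_of_nonempty_interior fun c hc => ⟨c, ?_⟩, hJA, hdisj,
    fun c hc => ⟨hr0 c (hJA hc), hrO c (hJA hc), hdoubling c (hJA hc)⟩,
    fun x hx => ?_⟩
  · exact ball_subset_interior_closedBall (mem_ball_self (hr0 c (hJA hc)))
  obtain ⟨c, hc, hsub⟩ := hcover x hx
  exact ⟨c, hc, hsub (mem_closedBall_self (hr0 x hx).le)⟩

end DoublingBalls

lemma tsum_mul_pow_pred_le {ι : Type*} {d : ℕ} (hd : 2 ≤ d) (a b : ι → ℝ≥0∞) :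
    ∑' i, a i * b i ^ (d - 1) ≤
      (∑' i, a i ^ d) ^ (d : ℝ)⁻¹ * (∑' i, b i ^ d) ^ (1 - (d : ℝ)⁻¹) := by
  let _ : MeasurableSpace ι := ⊤
  have hd' : (2 : ℝ) ≤ d := by exact_mod_cast hd
  have hpq : (d : ℝ).HolderConjugate (1 - (d : ℝ)⁻¹)⁻¹ := by
    rw [Real.holderConjugate_iff]
    exact ⟨by linarith, by rw [inv_inv]; ring⟩
  have hpow (t : ℝ≥0∞) : (t ^ (d - 1)) ^ (1 - (d : ℝ)⁻¹)⁻¹ = t ^ d := by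
    rw [← ENNReal.rpow_natCast, ← ENNReal.rpow_natCast, ← ENNReal.rpow_mul,
      Nat.cast_sub (by omega)]
    congr 1
    have : (d : ℝ) - 1 ≠ 0 := by linarith
    field_simp
    simp
  have := ENNReal.lintegral_mul_le_Lp_mul_Lq Measure.count hpq (f := a)
    (g := fun i => b i ^ (d - 1)) measurable_from_top.aemeasurable measurable_from_top.aemeasurable
  simpa only [lintegral_count, Pi.mul_apply, hpow, ENNReal.rpow_natCast, one_div, inv_inv]
    using this

lemma isLocallyFiniteMeasure_add {X : Type*} [TopologicalSpace X] [MeasurableSpace X]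
    (μ ν : Measure X) [IsLocallyFiniteMeasure μ] [IsLocallyFiniteMeasure ν] :
    IsLocallyFiniteMeasure (μ + ν) where
  finiteAtNhds x :=
    have ⟨s, hs, hμs, hνs⟩ := ((μ.finiteAt_nhds x).eventually.and
      (ν.finiteAt_nhds x).eventually).exists_mem_of_smallSets
    ⟨s, hs, add_lt_top.2 ⟨hμs, hνs⟩⟩

lemma ae_eq_zero_of_forall_exists_lintegral_le {X : Type*} [MeasurableSpace X] {ν : Measure X}
    {g : X → ℝ≥0∞} (h : ∀ ε : ℝ≥0∞, 0 < ε → ∃ S, Measurable S ∧ g ≤ S ∧ ∫⁻ x, S x ∂ν ≤ ε) :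
    g =ᵐ[ν] 0 := by
  choose S hS hgS hSint using fun m : ℕ => h (m : ℝ≥0∞)⁻¹ (by simp)
  have hint : ∫⁻ x, ⨅ m, S m x ∂ν = 0 :=
    le_antisymm (ge_of_tendsto' ENNReal.tendsto_inv_nat_nhds_zero fun m =>
      (lintegral_mono fun x => iInf_le _ m).trans (hSint m)) zero_le
  filter_upwards [(lintegral_eq_zero_iff (Measurable.iInf hS)).1 hint] with x hx
  exact le_antisymm ((le_iInf fun m => hgS m x).trans hx.le) zero_le

/-- The solid tube of (sup-norm) radius `s` around the line through `c` in the direction of the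
`i`-th coordinate axis. -/
def coordTube (i : Fin n) (c : En n) (s : ℝ) : Set (En n) := {x | ∀ l ≠ i, |x l - c l| ≤ s}

/-- The slab of half-width `R` around the `i`-th coordinate hyperplane. -/
def coordSlab (i : Fin n) (R : ℝ) : Set (En n) := {x | |x i| ≤ R}

lemma volume_setOf_forall_mem (B : Fin n → Set ℝ) :
    volume {x : En n | ∀ l, x l ∈ B l} = ∏ l, volume (B l) := by
  rw [← volume_pi_pi, ← (EuclideanSpace.volume_preserving_symm_measurableEquiv_toLp
    (Fin n)).measure_preimage_equiv]
  congr 1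
  ext x
  simp

lemma volume_coordTube_inter_coordSlab (i : Fin n) (c : En n) (s R : ℝ) :
    volume (coordTube i c s ∩ coordSlab i R) =
      ENNReal.ofReal (2 * R) * ENNReal.ofReal (2 * s) ^ (n - 1) := by
  classical
  have hbox : coordTube i c s ∩ coordSlab i R =
      {x | ∀ l, x l ∈ if l = i then closedBall 0 R else closedBall (c l) s} := by
    ext x
    simp only [coordTube, coordSlab, mem_inter_iff, mem_ofPred_eq, ← Real.dist_eq]
    refine ⟨fun h l => ?_, fun h => ⟨fun l hl => ?_, ?_⟩⟩
    · split_ifs with hl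
      · simpa [hl] using h.2
      · simpa using h.1 l hl
    · simpa [hl] using h l
    · simpa using h i
  rw [hbox, volume_setOf_forall_mem, ← Finset.mul_prod_erase _ _ (Finset.mem_univ i), if_pos rfl,
    Real.volume_closedBall, Finset.prod_congr rfl fun l hl => by
      rw [if_neg (Finset.ne_of_mem_erase hl), Real.volume_closedBall]]
  simp

lemma measurableSet_coordTube (i : Fin n) (c : En n) (s : ℝ) :
    MeasurableSet (coordTube i c s) := by
  simp only [coordTube, ofPred_forall]
  exact .iInter fun l => .iInter fun _ => measurableSet_le
    (((PiLp.continuous_apply 2 _ l).measurable.sub_const _).abs) measurable_const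

lemma setLIntegral_coordSlab_tsum_indicator_coordTube {ι : Type*} [Countable ι] (i : Fin n)
    (c : ι → En n) (s : ι → ℝ) (a : ι → ℝ≥0∞) (R : ℝ) :
    ∫⁻ x in coordSlab i R, ∑' j, (coordTube i (c j) (s j)).indicator (fun _ => a j) x =
      ENNReal.ofReal (2 * R) * ∑' j, a j * ENNReal.ofReal (2 * s j) ^ (n - 1) := by
  have hmeas (j) := measurableSet_coordTube i (c j) (s j)
  rw [lintegral_tsum fun j => (measurable_const.indicator (hmeas j)).aemeasurable,
    ← ENNReal.tsum_mul_left]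
  refine tsum_congr fun j => ?_
  rw [lintegral_indicator_const (hmeas j), Measure.restrict_apply (hmeas j),
    volume_coordTube_inter_coordSlab, mul_left_comm]

lemma ofReal_mul_pow_eq_mul_volume_closedBall (c : En n) {a r : ℝ} (ha : 0 ≤ a) (hr : 0 ≤ r) :
    ENNReal.ofReal (a * r) ^ n =
      ENNReal.ofReal a ^ n / volume (ball (0 : En n) 1) * volume (closedBall c r) := by
  rw [Measure.addHaar_closedBall volume c hr, finrank_euclideanSpace_fin,
    mul_comm (ENNReal.ofReal _), ← mul_assoc,
    ENNReal.div_mul_cancel (measure_ball_pos _ _ one_pos).ne' measure_ball_lt_top.ne,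
    ENNReal.ofReal_mul ha, mul_pow, ENNReal.ofReal_pow hr]

variable {μ : Measure (En n)} {C : ℝ≥0∞} {u : En n → ℝ} {A : Set (En n)}

lemma OscControlledOn.volume_image_inter_line_le (hn : n ≠ 0) (hu : OscControlledOn n μ C u A)
    {J : Set (En n)} (hJ : J.Countable) {r : En n → ℝ} (hJA : J ⊆ A)
    (hcover : ∀ x ∈ A, ∃ c ∈ J, x ∈ closedBall c (5 * r c)) {d : En n → ℝ≥0∞}
    (hd : ∀ c, C * μ (closedBall c (20 * r c)) = d c ^ n) (i : Fin n) (x : En n) :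
    volume (u '' (A ∩ range fun t : ℝ => x + t • EuclideanSpace.single i 1)) ≤
      ∑' c : J, (coordTube i (c : En n) (5 * r c)).indicator (fun _ => 2 * d c) x := by
  have := hJ.to_subtype
  have hsub : u '' (A ∩ range fun t : ℝ => x + t • EuclideanSpace.single i 1) ⊆
      ⋃ c : J, {s | x ∈ coordTube i (c : En n) (5 * r c) ∧ s ∈ closedEBall (u c) (d c)} := by
    rintro _ ⟨_, ⟨hA, t, rfl⟩, rfl⟩
    obtain ⟨c, hc, hmem⟩ := hcover _ hA
    refine mem_iUnion.2 ⟨⟨c, hc⟩, fun l hl => ?_, ?_⟩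
    · simpa [hl] using (PiLp.norm_apply_le _ l).trans (mem_closedBall_iff_norm.1 hmem)
    · rw [mem_closedEBall, edist_comm, ← ENNReal.pow_le_pow_left_iff hn, ← hd]
      refine (hu c (hJA hc) _ hA).trans ?_
      gcongr C * μ (closedBall c ?_)
      rw [dist_comm]
      linarith [mem_closedBall.1 hmem]
  refine (measure_mono hsub).trans ((measure_iUnion_le _).trans (ENNReal.tsum_le_tsum fun c => ?_))
  by_cases hx : x ∈ coordTube i (c : En n) (5 * r c)
  · simp only [hx, true_and, indicator_of_mem]
    exact (Real.volume_closedEBall (u c) (d c)).le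
  · simp [hx]

theorem OscControlledOn.exists_lintegral_volume_image_inter_line_le (hn : 2 ≤ n)
    [IsLocallyFiniteMeasure μ] (hμ : volume ≤ μ) (hu : OscControlledOn n μ C u A)
    {O : Set (En n)} (hO : IsOpen O) (hAO : A ⊆ O) (i : Fin n) (R : ℝ) :
    ∃ S : En n → ℝ≥0∞, Measurable S ∧
      (∀ x, volume (u '' (A ∩ range fun t : ℝ => x + t • EuclideanSpace.single i 1)) ≤ S x) ∧
      ∫⁻ x in coordSlab i R, S x ≤ 2 * ENNReal.ofReal (2 * R) *
        ((C * (2 * 20 ^ n) * μ O) ^ (n : ℝ)⁻¹ *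
          (10 ^ n / volume (ball (0 : En n) 1) * volume O) ^ (1 - (n : ℝ)⁻¹)) := by
  obtain ⟨J, r, hJ, hJA, hdisj, hr, hcover⟩ :=
    exists_disjoint_doubling_closedBall hμ hO hAO (Λ := 20) (by norm_num)
  have := hJ.to_subtype
  have hn0 : n ≠ 0 := by omega
  let d (c : En n) : ℝ≥0∞ := (C * μ (closedBall c (20 * r c))) ^ (n : ℝ)⁻¹
  have hd (c) : C * μ (closedBall c (20 * r c)) = d c ^ n := by
    rw [← ENNReal.rpow_natCast, ← ENNReal.rpow_mul, inv_mul_cancel₀ (by positivity),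
      ENNReal.rpow_one]
  have hsum (ν : Measure (En n)) : ∑' c : J, ν (closedBall (c : En n) (r c)) ≤ ν O :=
    (tsum_meas_le_meas_iUnion_of_disjoint ν (fun c => measurableSet_closedBall)
      hdisj.subtype).trans (measure_mono (iUnion_subset fun c => (hr c c.2).2.1))
  have hsumd : ∑' c : J, d c ^ n ≤ C * (2 * 20 ^ n) * μ O := by
    refine le_trans (ENNReal.tsum_le_tsum fun c => ?_)
      (ENNReal.tsum_mul_left.trans_le (mul_le_mul_right (hsum μ) _))
    rw [← hd, mul_assoc]
    gcongr
    simpa [ENNReal.ofReal_pow] using (hr c c.2).2.2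
  have hsumr : ∑' c : J, ENNReal.ofReal (2 * (5 * r c)) ^ n ≤
      10 ^ n / volume (ball (0 : En n) 1) * volume O := by
    refine le_trans (ENNReal.tsum_le_tsum fun c => ?_)
      (ENNReal.tsum_mul_left.trans_le (mul_le_mul_right (hsum volume) _))
    rw [← mul_assoc, ofReal_mul_pow_eq_mul_volume_closedBall c (by norm_num) (hr c c.2).1.le]
    norm_num
  refine ⟨fun x => ∑' c : J, (coordTube i (c : En n) (5 * r c)).indicator (fun _ => 2 * d c) x,
    Measurable.tsum fun c => measurable_const.indicator (measurableSet_coordTube _ _ _),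
    hu.volume_image_inter_line_le hn0 hJ hJA hcover hd i, ?_⟩
  have hexp : 0 ≤ 1 - (n : ℝ)⁻¹ := sub_nonneg.2 (Nat.cast_inv_le_one n)
  calc _ = 2 * ENNReal.ofReal (2 * R) *
        ∑' c : J, d c * ENNReal.ofReal (2 * (5 * r c)) ^ (n - 1) := by
        simp_rw [setLIntegral_coordSlab_tsum_indicator_coordTube, mul_assoc 2 (d _),
          ENNReal.tsum_mul_left, ← mul_assoc, mul_comm _ (2 : ℝ≥0∞)]
    _ ≤ _ := by grw [tsum_mul_pow_pred_le hn, hsumd, hsumr]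

theorem OscControlledOn.ae_volume_image_inter_line_eq_zero (hn : 2 ≤ n)
    [IsLocallyFiniteMeasure μ] (hμ : volume ≤ μ) (hC : C ≠ ∞) (hu : OscControlledOn n μ C u A)
    (hA : volume A = 0) {R : ℝ} (hAR : A ⊆ ball 0 R) (i : Fin n) :
    ∀ᵐ x, x ∈ coordSlab i R →
      volume (u '' (A ∩ range fun t : ℝ => x + t • EuclideanSpace.single i 1)) = 0 := by
  have hslab : MeasurableSet (coordSlab i R) :=
    measurableSet_le (PiLp.continuous_apply 2 _ i).measurable.abs measurable_const
  rw [← ae_restrict_iff' hslab]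
  refine ae_eq_zero_of_forall_exists_lintegral_le fun ε hε => ?_
  set M := C * (2 * 20 ^ n) * μ (ball 0 R)
  set ω := volume (ball (0 : En n) 1)
  have hω : ω ≠ 0 := (measure_ball_pos _ _ one_pos).ne'
  have hM : M ≠ ∞ := by have := measure_ball_lt_top (μ := μ) (x := 0) (r := R).ne; finiteness
  have hpos : 0 < 1 - (n : ℝ)⁻¹ :=
    sub_pos.2 (inv_lt_one_of_one_lt₀ (by exact_mod_cast hn))
  have hlim : Tendsto (fun η : ℝ≥0∞ => 2 * ENNReal.ofReal (2 * R) *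
      (M ^ (n : ℝ)⁻¹ * (10 ^ n / ω * η) ^ (1 - (n : ℝ)⁻¹))) (𝓝[>] 0) (𝓝 0) := by
    have : Tendsto (fun η : ℝ≥0∞ => 2 * ENNReal.ofReal (2 * R) *
        (M ^ (n : ℝ)⁻¹ * (10 ^ n / ω * η) ^ (1 - (n : ℝ)⁻¹))) (𝓝 0)
        (𝓝 (2 * ENNReal.ofReal (2 * R) *
          (M ^ (n : ℝ)⁻¹ * (10 ^ n / ω * 0) ^ (1 - (n : ℝ)⁻¹)))) := by
      refine ENNReal.Tendsto.const_mul (ENNReal.Tendsto.const_mul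
        (((ENNReal.continuous_rpow_const).tendsto _).comp
          (ENNReal.Tendsto.const_mul tendsto_id ?_)) ?_) ?_
      all_goals right; finiteness
    simpa only [mul_zero, ENNReal.zero_rpow_of_pos hpos] using this.mono_left nhdsWithin_le_nhds
  obtain ⟨η, hηε, hη⟩ := ((hlim.eventually_le_const hε).and self_mem_nhdsWithin).exists
  obtain ⟨O, hAO, hO, hOη⟩ := A.exists_isOpen_lt_of_lt (μ := volume) η (hA ▸ hη)
  obtain ⟨S, hS, huS, hSint⟩ := hu.exists_lintegral_volume_image_inter_line_le hn hμ
    (hO.inter isOpen_ball) (subset_inter hAO hAR) i R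
  refine ⟨S, hS, huS, hSint.trans (le_trans ?_ hηε)⟩
  gcongr
  · exact mul_le_mul_right (measure_mono inter_subset_right) _
  · exact (measure_mono inter_subset_left).trans hOη.le

theorem OscControlled.ae_volume_image_inter_line_eq_zero (hn : 2 ≤ n)
    [IsLocallyFiniteMeasure μ] (hC : C ≠ ∞) (hu : OscControlled n μ C u) {N : Set (En n)}
    (hN : volume N = 0) (i : Fin n) :
    ∀ᵐ x, volume (u '' (N ∩ range fun t : ℝ => x + t • EuclideanSpace.single i 1)) = 0 := by
  have := isLocallyFiniteMeasure_add volume μ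
  obtain ⟨G, hGU, hG⟩ := hu.mono_measure (Measure.le_add_left le_rfl : μ ≤ volume + μ)
  have hpiece (k R : ℕ) : ∀ᵐ x, x ∈ coordSlab i R → volume (u '' (N ∩ G k ∩ ball 0 R ∩
      range fun t : ℝ => x + t • EuclideanSpace.single i 1)) = 0 :=
    OscControlledOn.ae_volume_image_inter_line_eq_zero hn (Measure.le_add_right le_rfl) hC
      (fun x hx y hy => hG k x hx.1.2 y hy.1.2)
      (measure_mono_null (inter_subset_left.trans inter_subset_left) hN) inter_subset_right i
  filter_upwards [ae_all_iff.2 fun k => ae_all_iff.2 (hpiece k)] with x hx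
  refine measure_mono_null (t := ⋃ (k : ℕ) (R : ℕ) (_ : x ∈ coordSlab i R), u '' (N ∩ G k ∩
    ball 0 R ∩ range fun t : ℝ => x + t • EuclideanSpace.single i 1)) ?_
    (measure_iUnion_null fun k => measure_iUnion_null fun R => measure_iUnion_null (hx k R))
  rintro _ ⟨y, ⟨hyN, hy⟩, rfl⟩
  obtain ⟨k, hk⟩ := mem_iUnion.1 (hGU ▸ mem_univ y)
  obtain ⟨R, hR⟩ := exists_nat_gt (max |x i| (dist y 0))
  simp only [mem_iUnion]
  exact ⟨k, R, (le_max_left _ _).trans hR.le,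
    mem_image_of_mem u ⟨⟨⟨hyN, hk⟩, (le_max_right _ _).trans_lt hR⟩, hy⟩⟩

end LusinOnLines

section OnTheLine

variable {F : ℝ → ℝ} {h : ℝ → ℝ≥0∞}

lemma absolutelyContinuousOnInterval_of_edist_le {X : Type*} [PseudoMetricSpace X] {F : ℝ → X}
    (hm : Measurable h) (hint : ∀ a b, ∫⁻ t in uIcc a b, h t ≠ ∞)
    (hF : ∀ a b, edist (F a) (F b) ≤ ∫⁻ t in uIcc a b, h t) (a b : ℝ) :
    AbsolutelyContinuousOnInterval F a b := by
  have hi (a b) : IntervalIntegrable (fun t => (h t).toReal) volume a b :=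
    (intervalIntegrable_iff' (by simp)).2
      (integrable_toReal_of_lintegral_ne_top hm.aemeasurable (hint a b))
  have hprim (x y) : dist (F x) (F y) ≤
      dist (∫ t in a..x, (h t).toReal) (∫ t in a..y, (h t).toReal) := by
    rw [dist_comm (∫ t in a..x, (h t).toReal), Real.dist_eq,
      intervalIntegral.integral_interval_sub_left (hi _ _) (hi _ _),
      intervalIntegral.abs_integral_eq_abs_integral_uIoc, uIoc, ← integral_Icc_eq_integral_Ioc,
      ← uIcc, integral_toReal hm.aemeasurable (ae_lt_top hm (hint x y)),
      abs_of_nonneg ENNReal.toReal_nonneg, ← ENNReal.ofReal_le_iff_le_toReal (hint x y),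
      ← edist_dist]
    exact hF x y
  exact squeeze_zero' (Eventually.of_forall fun E => Finset.sum_nonneg fun _ _ => dist_nonneg)
    (Eventually.of_forall fun E => Finset.sum_le_sum fun k _ => hprim _ _)
    ((hi a b).absolutelyContinuousOnInterval_intervalIntegral left_mem_uIcc)

lemma ae_differentiableAt_of_absolutelyContinuousOnInterval
    (hF : ∀ a b, AbsolutelyContinuousOnInterval F a b) : ∀ᵐ t, DifferentiableAt ℝ F t := by
  filter_upwards [ae_all_iff.2 fun R : ℕ => (hF (-R) R).ae_differentiableAt] with t ht
  obtain ⟨R, hR⟩ := exists_nat_ge |t|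
  exact ht R (Icc_subset_uIcc (abs_le.1 hR))

theorem integral_mul_deriv_eq_neg_of_absolutelyContinuousOnInterval
    (hF : ∀ a b, AbsolutelyContinuousOnInterval F a b) {φ : ℝ → ℝ} (hφ : ContDiff ℝ 1 φ)
    (hφc : HasCompactSupport φ) : ∫ t, F t * deriv φ t = -∫ t, φ t * deriv F t := by
  obtain ⟨R, hR⟩ := (isBounded_iff_subset_ball 0).1 hφc.isBounded
  have hsupp : tsupport φ ⊆ Ioo (-R) R := by simpa [Real.ball_eq_Ioo] using hR
  have hφ_left : φ (-R) = 0 := image_eq_zero_of_notMem_tsupport fun h => (hsupp h).1.false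
  have hφ_right : φ R = 0 := image_eq_zero_of_notMem_tsupport fun h => (hsupp h).2.false
  have hparts := (hF (-R) R).integral_mul_deriv_eq_deriv_mul
    hφ.contDiffOn.absolutelyContinuousOnInterval
  simp_rw [hφ_left, hφ_right, mul_zero, sub_zero, zero_sub, mul_comm (deriv F _)] at hparts
  rwa [intervalIntegral.integral_eq_integral_of_support_subset,
    intervalIntegral.integral_eq_integral_of_support_subset] at hparts
  · exact fun t ht => Ioo_subset_Ioc_self (hsupp (subset_tsupport φ (left_ne_zero_of_mul ht)))
  · exact fun t ht =>
      Ioo_subset_Ioc_self (hsupp (support_deriv_subset (f := φ) (right_ne_zero_of_mul ht)))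

lemma ae_mem_uniqueDiffWithinAt (s : Set ℝ) : ∀ᵐ t : ℝ, t ∈ s → UniqueDiffWithinAt ℝ s t := by
  filter_upwards [(countable_setOfPred_isolated_right_within (s := s)).ae_notMem volume]
    with t ht hts
  rw [uniqueDiffWithinAt_iff_accPt]
  have hright : (𝓝[s ∩ Ioi t] t).NeBot := ⟨fun h => ht ⟨hts, h⟩⟩
  refine hright.mono ?_
  simp only [nhdsWithin, inf_assoc, inf_principal]
  exact inf_le_inf_left _ (principal_mono.2 fun s hs => ⟨ne_of_gt hs.2, hs.1⟩)

namespace LipschitzDecomposition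

variable (D : LipschitzDecomposition volume F)

lemma volume_image_le_setLIntegral (hnull : volume (F '' (⋃ j, D.piece j)ᶜ) = 0)
    (hh : ∀ j, ∀ t ∈ D.piece j, (D.const j : ℝ≥0∞) ≤ h t) {s : Set ℝ} (hs : MeasurableSet s) :
    volume (F '' s) ≤ ∫⁻ t in s, h t := by
  have hpiece (j) : volume (F '' (s ∩ D.piece j)) ≤ ∫⁻ t in s ∩ D.piece j, h t := by
    have hlip := ((D.lipschitzOnWith_piece j).mono inter_subset_right :
      LipschitzOnWith _ F (s ∩ D.piece j)).hausdorffMeasure_image_le zero_le_one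
    rw [hausdorffMeasure_real, ENNReal.rpow_one, ← setLIntegral_const] at hlip
    exact hlip.trans <| setLIntegral_mono' (hs.inter (D.measurableSet_piece j))
      fun t ht => hh j t ht.2
  have hsub : F '' s ⊆ F '' (⋃ j, D.piece j)ᶜ ∪ ⋃ j, F '' (s ∩ D.piece j) := by
    rw [← image_iUnion, ← inter_iUnion, ← image_union]
    exact image_mono fun t ht => or_iff_not_imp_left.2 fun h => ⟨ht, not_not.1 h⟩
  calc volume (F '' s) ≤ 0 + ∑' j, volume (F '' (s ∩ D.piece j)) :=
        (measure_mono hsub).trans <| (measure_union_le _ _).trans <|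
          add_le_add hnull.le (measure_iUnion_le _)
    _ ≤ ∑' j, ∫⁻ t in s ∩ D.piece j, h t := by
        rw [zero_add]
        exact ENNReal.tsum_le_tsum hpiece
    _ = ∫⁻ t in s, h t := (D.setLIntegral_eq_tsum hs h).symm

lemma edist_le_setLIntegral (hF : Continuous F) (hnull : volume (F '' (⋃ j, D.piece j)ᶜ) = 0)
    (hh : ∀ j, ∀ t ∈ D.piece j, (D.const j : ℝ≥0∞) ≤ h t) (a b : ℝ) :
    edist (F a) (F b) ≤ ∫⁻ t in uIcc a b, h t :=
  calc edist (F a) (F b) = volume (uIcc (F a) (F b)) := by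
        rw [Real.volume_interval, edist_dist, dist_comm, Real.dist_eq]
    _ ≤ volume (F '' uIcc a b) := measure_mono (intermediate_value_uIcc hF.continuousOn)
    _ ≤ ∫⁻ t in uIcc a b, h t := D.volume_image_le_setLIntegral hnull hh measurableSet_uIcc

variable {D} {g : ℝ → ℝ →L[ℝ] ℝ}

lemma IsDeriv.ae_deriv_eq (hg : D.IsDeriv g) :
    ∀ᵐ t, DifferentiableAt ℝ F t → deriv F t = g t 1 := by
  filter_upwards [D.ae_mem_piece, ae_all_iff.2 fun j => ae_mem_uniqueDiffWithinAt (D.piece j)]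
    with t ⟨j, hj⟩ huniq hdiff
  exact (huniq j hj).eq_deriv _ hdiff.hasDerivAt.hasDerivWithinAt (hg j t hj).hasDerivWithinAt

theorem IsDeriv.integral_mul_deriv_eq_neg (hg : D.IsDeriv g) (hF : Continuous F)
    (hnull : volume (F '' (⋃ j, D.piece j)ᶜ) = 0) (hm : Measurable h)
    (hint : ∀ a b, ∫⁻ t in uIcc a b, h t ≠ ∞)
    (hh : ∀ j, ∀ t ∈ D.piece j, (D.const j : ℝ≥0∞) ≤ h t) {φ : ℝ → ℝ} (hφ : ContDiff ℝ 1 φ)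
    (hφc : HasCompactSupport φ) : ∫ t, F t * deriv φ t = -∫ t, φ t * g t 1 := by
  have hac :=
    absolutelyContinuousOnInterval_of_edist_le hm hint (D.edist_le_setLIntegral hF hnull hh)
  rw [integral_mul_deriv_eq_neg_of_absolutelyContinuousOnInterval hac hφ hφc]
  congr 1
  refine integral_congr_ae ?_
  filter_upwards [hg.ae_deriv_eq, ae_differentiableAt_of_absolutelyContinuousOnInterval hac]
    with t ht hdiff
  rw [ht hdiff]

end LipschitzDecomposition

end OnTheLine

section FubiniAlongLines

variable {E : Type*} [NormedAddCommGroup E] [NormedSpace ℝ E] [FiniteDimensional ℝ E]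
  [MeasurableSpace E] [BorelSpace E] (μ : Measure E) [μ.IsAddHaarMeasure]

lemma measurePreserving_shear (e : E) :
    MeasurePreserving (fun z : E × ℝ => (z.2, z.1 + z.2 • e)) (μ.prod volume)
      (volume.prod μ) :=
  (MeasurePreserving.skew_product (g := fun (t : ℝ) (x : E) => x + t • e)
    (MeasurePreserving.id volume) (by fun_prop)
    (ae_of_all _ fun t => (measurePreserving_add_right μ (t • e)).map_eq)).comp
    Measure.measurePreserving_swap

variable {μ}

lemma ae_ae_add_smul (e : E) {p : E → Prop} (hp : ∀ᵐ x ∂μ, p x) :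
    ∀ᵐ x ∂μ, ∀ᵐ t : ℝ, p (x + t • e) :=
  Measure.ae_ae_of_ae_prod <|
    (Measure.quasiMeasurePreserving_snd.comp
      (measurePreserving_shear μ e).quasiMeasurePreserving).ae hp

lemma setLIntegral_setLIntegral_add_smul_le (e : E) {h : E → ℝ≥0∞} (hm : Measurable h) (R : ℝ) :
    ∫⁻ x in ball 0 R, (∫⁻ t in Icc (-R) R, h (x + t • e)) ∂μ ≤
      (∫⁻ x in ball 0 (R + R * ‖e‖), h x ∂μ) * volume (Icc (-R) R) := by
  rw [lintegral_lintegral_swap (by fun_prop), ← setLIntegral_const]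
  refine setLIntegral_mono measurable_const fun t ht => ?_
  rw [(measurePreserving_add_right μ (t • e)).setLIntegral_comp_emb
    (measurableEmbedding_addRight _) h]
  refine lintegral_mono_set ?_
  rintro _ ⟨x, hx, rfl⟩
  rw [mem_ball_zero_iff] at hx ⊢
  have ht' : |t| ≤ R := abs_le.2 ht
  calc ‖x + t • e‖ ≤ ‖x‖ + |t| * ‖e‖ := by simpa [norm_smul] using norm_add_le x (t • e)
    _ < R + R * ‖e‖ := add_lt_add_of_lt_of_le hx (by gcongr)

lemma ae_setLIntegral_uIcc_add_smul_ne_top (e : E) {h : E → ℝ≥0∞} (hm : Measurable h)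
    (hint : ∀ R, ∫⁻ x in ball 0 R, h x ∂μ ≠ ∞) :
    ∀ᵐ x ∂μ, ∀ a b : ℝ, ∫⁻ t in uIcc a b, h (x + t • e) ≠ ∞ := by
  have hbox (R : ℕ) :
      ∀ᵐ x ∂μ, x ∈ ball 0 (R : ℝ) → ∫⁻ t in Icc (-R : ℝ) R, h (x + t • e) < ∞ := by
    rw [← ae_restrict_iff' measurableSet_ball]
    refine ae_lt_top (Measurable.lintegral_prod_right' (f := fun z : E × ℝ => h (z.1 + z.2 • e))
      (by fun_prop)) ?_
    exact ne_top_of_le_ne_top (ENNReal.mul_ne_top (hint _) (by simp))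
      (setLIntegral_setLIntegral_add_smul_le e hm R)
  filter_upwards [ae_all_iff.2 hbox] with x hx a b
  obtain ⟨R, hR⟩ := exists_nat_gt (max ‖x‖ (max |a| |b|))
  simp only [max_lt_iff] at hR
  exact ne_top_of_le_ne_top (hx R (mem_ball_zero_iff.2 hR.1)).ne <| lintegral_mono_set <|
    uIcc_subset_Icc (abs_le.1 hR.2.1.le) (abs_le.1 hR.2.2.le)

variable {F : Type*} [NormedAddCommGroup F] [NormedSpace ℝ F] {G : E → F} {e : E} {ℓ : E →L[ℝ] ℝ}

variable (μ) in
lemma measurePreserving_apply_prod_add_smul (hℓ : ℓ e = 1) :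
    MeasurePreserving (fun z : E × ℝ => (ℓ z.1, z.1 + z.2 • e)) (μ.prod volume)
      (volume.prod μ) := by
  have hreflect : MeasurePreserving (fun z : E × ℝ => (z.1, ℓ z.1 - z.2)) (μ.prod volume)
      (μ.prod volume) :=
    MeasurePreserving.skew_product (g := fun (y : E) (t : ℝ) => ℓ y - t)
      (MeasurePreserving.id μ) (by fun_prop)
      (ae_of_all _ fun y => (Measure.measurePreserving_sub_left volume (ℓ y)).map_eq)
  convert (Measure.measurePreserving_swap.comp hreflect).comp
    (Measure.measurePreserving_swap.comp (measurePreserving_shear μ e)) using 1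
  ext z <;> simp [hℓ]

/-- Fubini without splitting off a coordinate: every line in the direction `e` meets the slab
`0 ≤ ℓ ≤ 1` in unit length. -/
lemma integral_eq_integral_smul_integral_add_smul (hℓ : ℓ e = 1) (hG : Integrable G μ) :
    ∫ x, G x ∂μ =
      ∫ x, (Icc (0 : ℝ) 1).indicator (1 : ℝ → ℝ) (ℓ x) • (∫ t : ℝ, G (x + t • e)) ∂μ := by
  set χ : ℝ → ℝ := (Icc (0 : ℝ) 1).indicator 1
  have hχ : Integrable χ := (integrable_indicator_iff measurableSet_Icc).2 (integrable_const 1)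
  have hχG : Integrable (fun z : ℝ × E => χ z.1 • G z.2) (volume.prod μ) := hχ.smul_prod hG
  have hΘ := measurePreserving_apply_prod_add_smul μ hℓ
  have hχGΘ : Integrable (fun z : E × ℝ => χ (ℓ z.1) • G (z.1 + z.2 • e)) (μ.prod volume) :=
    hΘ.integrable_comp_of_integrable hχG
  calc ∫ x, G x ∂μ = ∫ z : ℝ × E, χ z.1 • G z.2 ∂(volume.prod μ) := by
        rw [integral_prod_smul, integral_indicator_one measurableSet_Icc]
        simp
    _ = ∫ z : E × ℝ, χ (ℓ z.1) • G (z.1 + z.2 • e) ∂(μ.prod volume) := by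
        rw [← hΘ.map_eq] at hχG ⊢
        exact integral_map hΘ.measurable.aemeasurable hχG.aestronglyMeasurable
    _ = _ := by
        rw [integral_prod _ hχGΘ]
        simp_rw [integral_smul]

lemma integral_eq_of_ae_integral_add_smul_eq {G' : E → F} (he : e ≠ 0) (hG : Integrable G μ)
    (hG' : Integrable G' μ)
    (h : ∀ᵐ x ∂μ, ∫ t : ℝ, G (x + t • e) = ∫ t : ℝ, G' (x + t • e)) :
    ∫ x, G x ∂μ = ∫ x, G' x ∂μ := by
  obtain ⟨ℓ, hℓ⟩ := SeparatingDual.exists_eq_one (R := ℝ) he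
  rw [integral_eq_integral_smul_integral_add_smul hℓ hG,
    integral_eq_integral_smul_integral_add_smul hℓ hG']
  refine integral_congr_ae ?_
  filter_upwards [h] with x hx
  rw [hx]

end FubiniAlongLines

section WeakGradient

namespace LipschitzDecomposition

section Composition

variable {W X Y Z : Type*} [MeasurableSpace W] [PseudoEMetricSpace W] [MeasurableSpace X]
  [PseudoEMetricSpace X] [PseudoEMetricSpace Y] [PseudoEMetricSpace Z] {ν : Measure X} {f : X → Y}

/-- The same pieces and constants serve for `q ∘ f` when `q` is 1-Lipschitz. -/
def postcomp (D : LipschitzDecomposition ν f) {q : Y → Z} (hq : LipschitzWith 1 q) :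
    LipschitzDecomposition ν (q ∘ f) where
  __ := D
  lipschitzOnWith_piece j := by simpa using hq.comp_lipschitzOnWith (D.lipschitzOnWith_piece j)

/-- The preimages of the pieces under a 1-Lipschitz map `p` that sends almost every point into some
piece. -/
def precomp (D : LipschitzDecomposition ν f) {p : W → X} (hp : LipschitzWith 1 p)
    (hpm : Measurable p) {ν' : Measure W} (hae : ∀ᵐ w ∂ν', ∃ j, p w ∈ D.piece j) :
    LipschitzDecomposition ν' (f ∘ p) where
  piece j := p ⁻¹' D.piece j
  const := D.const
  measurableSet_piece j := hpm (D.measurableSet_piece j)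
  pairwise_disjoint_piece _ _ hij := (D.pairwise_disjoint_piece hij).preimage p
  ae_mem_piece := hae
  lipschitzOnWith_piece j := by
    simpa using (D.lipschitzOnWith_piece j).comp hp.lipschitzOnWith (mapsTo_preimage p _)

end Composition

section Derivative

variable {E F F' : Type*} [NormedAddCommGroup E] [NormedSpace ℝ E] [MeasurableSpace E]
  [NormedAddCommGroup F] [NormedSpace ℝ F] [NormedAddCommGroup F'] [NormedSpace ℝ F']
  {ν : Measure E} {f : E → F} {D : LipschitzDecomposition ν f} {g : E → E →L[ℝ] F}

lemma IsDeriv.postcomp (hg : D.IsDeriv g) {q : F →L[ℝ] F'} (hq : LipschitzWith 1 q) :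
    (D.postcomp hq).IsDeriv fun x => q ∘L g x :=
  fun j x hx => q.hasFDerivAt.comp_hasFDerivWithinAt x (hg j x hx)

lemma IsDeriv.precomp {E' : Type*} [NormedAddCommGroup E'] [NormedSpace ℝ E'] [MeasurableSpace E']
    (hg : D.IsDeriv g) {p : E' → E} (hp : LipschitzWith 1 p) (hpm : Measurable p)
    {ν' : Measure E'} (hae : ∀ᵐ w ∂ν', ∃ j, p w ∈ D.piece j) {p' : E' → E' →L[ℝ] E}
    (hp' : ∀ w, HasFDerivAt p (p' w) w) :
    (D.precomp hp hpm hae).IsDeriv fun w => g (p w) ∘L p' w :=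
  fun j w hw => (hg j (p w) hw).comp w (hp' w).hasFDerivWithinAt (mapsTo_preimage p _)

end Derivative

end LipschitzDecomposition

section Lines

variable {E : Type*} [NormedAddCommGroup E] [NormedSpace ℝ E] {e : E}

lemma isometry_add_smul (he : ‖e‖ = 1) (x : E) : Isometry fun t : ℝ => x + t • e := by
  simpa using isometry_sub_smul (e := -e) (by simpa) x

lemma hasDerivAt_add_smul (x : E) (t : ℝ) : HasDerivAt (fun t : ℝ => x + t • e) e t := by
  simpa using ((hasDerivAt_id t).smul_const e).const_add x

variable [FiniteDimensional ℝ E] [MeasurableSpace E] [BorelSpace E] {μ : Measure E}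
  [μ.IsAddHaarMeasure] {u : E → ℝ} {D : LipschitzDecomposition μ u} {g : E → E →L[ℝ] ℝ}
  {h : E → ℝ≥0∞} {φ : E → ℝ}

namespace LipschitzDecomposition

lemma IsDeriv.ae_integral_mul_fderiv_add_smul_eq_neg (hg : D.IsDeriv g) (hu : Continuous u)
    (hm : Measurable h) (hint : ∀ R, ∫⁻ x in ball 0 R, h x ∂μ ≠ ∞)
    (hh : ∀ j, ∀ x ∈ D.piece j, (D.const j : ℝ≥0∞) ≤ h x) (he : ‖e‖ = 1)
    (hnull : ∀ᵐ x ∂μ, volume (u '' ((⋃ j, D.piece j)ᶜ ∩ range fun t : ℝ => x + t • e)) = 0)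
    (hφ : ContDiff ℝ 1 φ) (hφc : HasCompactSupport φ) :
    ∀ᵐ x ∂μ, ∫ t : ℝ, u (x + t • e) * fderiv ℝ φ (x + t • e) e =
      -∫ t : ℝ, φ (x + t • e) * g (x + t • e) e := by
  filter_upwards [ae_setLIntegral_uIcc_add_smul_ne_top e hm hint,
    ae_ae_add_smul e D.ae_mem_piece, hnull] with x hxint hxpiece hxnull
  have hiso := isometry_add_smul he x
  have hφ' (t : ℝ) : deriv (φ ∘ fun t : ℝ => x + t • e) t = fderiv ℝ φ (x + t • e) e :=
    ((hφ.differentiable one_ne_zero _).hasFDerivAt.comp_hasDerivAt t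
      (hasDerivAt_add_smul x t)).deriv
  have hderiv := hg.precomp hiso.lipschitz hiso.continuous.measurable hxpiece
    fun t => (hasDerivAt_add_smul x t).hasFDerivAt
  have hxnull' : volume ((u ∘ fun t : ℝ => x + t • e) ''
      (⋃ j, (fun t : ℝ => x + t • e) ⁻¹' D.piece j)ᶜ) = 0 := by
    rwa [← preimage_iUnion, ← preimage_compl, image_comp, image_preimage_eq_inter_range]
  simpa [hφ'] using hderiv.integral_mul_deriv_eq_neg (hu.comp hiso.continuous) hxnull'
    (hm.comp hiso.continuous.measurable) hxint (fun j t ht => hh j _ ht)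
    (hφ.comp (by fun_prop)) (hφc.comp_isClosedEmbedding hiso.isClosedEmbedding)

theorem IsDeriv.integral_mul_fderiv_eq_neg (hg : D.IsDeriv g) (hu : Continuous u)
    (hm : Measurable h) (hint : ∀ R, ∫⁻ x in ball 0 R, h x ∂μ ≠ ∞)
    (hh : ∀ j, ∀ x ∈ D.piece j, (D.const j : ℝ≥0∞) ≤ h x) (he : ‖e‖ = 1)
    (hnull : ∀ᵐ x ∂μ, volume (u '' ((⋃ j, D.piece j)ᶜ ∩ range fun t : ℝ => x + t • e)) = 0)
    (hge : LocallyIntegrable (fun x => g x e) μ) (hφ : ContDiff ℝ 1 φ)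
    (hφc : HasCompactSupport φ) :
    ∫ x, u x * fderiv ℝ φ x e ∂μ = -∫ x, φ x * g x e ∂μ := by
  have hleft : Integrable (fun x => u x * fderiv ℝ φ x e) μ :=
    (hu.mul ((hφ.continuous_fderiv one_ne_zero).clm_apply
      continuous_const)).integrable_of_hasCompactSupport (hφc.fderiv_apply (𝕜 := ℝ) e).mul_left
  have hright : Integrable (fun x => φ x * g x e) μ :=
    hge.integrable_smul_left_of_hasCompactSupport hφ.continuous hφc
  rw [← integral_neg]
  refine integral_eq_of_ae_integral_add_smul_eq (norm_ne_zero_iff.1 (he ▸ one_ne_zero)) hleft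
    hright.neg ?_
  filter_upwards [hg.ae_integral_mul_fderiv_add_smul_eq_neg hu hm hint hh he hnull hφ hφc]
    with x hx
  rw [hx, integral_neg]

end LipschitzDecomposition

end Lines

section Coordinates

lemma lipschitzWith_euclideanSpace_proj (l : Fin n) :
    LipschitzWith 1 (EuclideanSpace.proj l : En n →L[ℝ] ℝ) :=
  LipschitzWith.mk_one fun x y => by
    simpa [dist_eq_norm] using PiLp.norm_apply_le (x - y) l

lemma integral_clm_apply_apply {T : En n → En n →L[ℝ] En n} (hT : Integrable T) (v : En n)
    (l : Fin n) : (∫ x, T x) v l = ∫ x, T x v l := by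
  rw [ContinuousLinearMap.integral_apply hT]
  exact ((EuclideanSpace.proj (𝕜 := ℝ) l).integral_comp_comm (hT.apply_continuousLinearMap v)).symm

lemma hasWeakGradOn_univ_of_single {f : En n → En n} {g : En n → En n →L[ℝ] En n}
    (hf : Continuous f) (hg : LocallyIntegrable g)
    (h : ∀ φ : En n → ℝ, ContDiff ℝ 1 φ → HasCompactSupport φ → ∀ i l : Fin n,
      ∫ x, f x l * fderiv ℝ φ x (EuclideanSpace.single i 1) =
        -∫ x, φ x * g x (EuclideanSpace.single i 1) l) :
    HasWeakGradOn f g univ := by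
  intro φ hφ hφc _ v
  have hleft : Integrable fun x => (fderiv ℝ φ x).smulRight (f x) :=
    (((ContinuousLinearMap.smulRightL ℝ (En n) (En n)).continuous.comp
      (hφ.continuous_fderiv one_ne_zero)).clm_apply hf).integrable_of_hasCompactSupport
      ((hφc.fderiv ℝ).mono fun x hx hx' => hx (by simp [hx']))
  have hright : Integrable fun x => φ x • g x :=
    hg.integrable_smul_left_of_hasCompactSupport hφ.continuous hφc
  have hclm : ∫ x, (fderiv ℝ φ x).smulRight (f x) = -∫ x, φ x • g x := by
    refine ContinuousLinearMap.coe_injective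
      ((EuclideanSpace.basisFun (Fin n) ℝ).toBasis.ext fun i => ?_)
    ext l
    simpa [integral_clm_apply_apply hleft, integral_clm_apply_apply hright, mul_comm]
      using h φ hφ hφc i l
  simpa [ContinuousLinearMap.integral_apply hleft, ContinuousLinearMap.integral_apply hright]
    using DFunLike.congr_fun hclm v

theorem LipschitzDecomposition.IsDeriv.hasWeakGradOn_univ {f : En n → En n}
    {D : LipschitzDecomposition volume f} {g : En n → En n →L[ℝ] En n} (hg : D.IsDeriv g)
    (hf : Continuous f) {h : En n → ℝ≥0∞} (hm : Measurable h)
    (hint : ∀ R, ∫⁻ x in ball 0 R, h x ≠ ∞)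
    (hh : ∀ j, ∀ x ∈ D.piece j, (D.const j : ℝ≥0∞) ≤ h x) (hgint : LocallyIntegrable g)
    (hnull : ∀ i l : Fin n, ∀ᵐ x, volume ((EuclideanSpace.proj (𝕜 := ℝ) l ∘ f) ''
      ((⋃ j, D.piece j)ᶜ ∩ range fun t : ℝ => x + t • EuclideanSpace.single i 1)) = 0) :
    HasWeakGradOn f g univ := by
  refine hasWeakGradOn_univ_of_single hf hgint fun φ hφ hφc i l => ?_
  have hl := lipschitzWith_euclideanSpace_proj l
  let L : (En n →L[ℝ] En n) →L[ℝ] ℝ :=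
    EuclideanSpace.proj (𝕜 := ℝ) l ∘L ContinuousLinearMap.apply ℝ (En n) (EuclideanSpace.single i 1)
  have hgil : LocallyIntegrable (L ∘ g) := fun x => L.integrableAtFilter_comp (hgint x)
  exact (hg.postcomp hl).integral_mul_fderiv_eq_neg (hl.continuous.comp hf) hm hint hh
    (by simp) (hnull i l) hgil hφ hφc

end Coordinates

end WeakGradient

section SobolevRegularity

lemma locallyIntegrable_of_ae_enorm_le {X F : Type*} [SeminormedAddCommGroup X] [MeasurableSpace X]
    [NormedAddCommGroup F] {ν : Measure X} {G : X → F} {h : X → ℝ≥0∞}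
    (hG : AEStronglyMeasurable G ν) (hGh : ∀ᵐ x ∂ν, ‖G x‖ₑ ≤ h x)
    (hint : ∀ R, ∫⁻ x in ball 0 R, h x ∂ν ≠ ∞) : LocallyIntegrable G ν := fun x =>
  ⟨ball 0 (‖x‖ + 1), isOpen_ball.mem_nhds (by simp), hG.restrict,
    (lintegral_mono_ae (ae_restrict_of_ae hGh)).trans_lt (hint _).lt_top⟩

lemma le_one_add_pow {R : Type*} [Semiring R] [LinearOrder R] [IsOrderedRing R] {a : R}
    (ha : 0 ≤ a) {d : ℕ} (hd : d ≠ 0) : a ≤ 1 + a ^ d := by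
  rcases le_total a 1 with h | h
  · exact h.trans (le_add_of_nonneg_right (pow_nonneg ha d))
  · exact (le_self_pow₀ h hd).trans (le_add_of_nonneg_left zero_le_one)

lemma setLIntegral_ball_one_add_mul_rnDeriv_ne_top {X : Type*} [PseudoMetricSpace X] [ProperSpace X]
    [MeasurableSpace X] {μ ν : Measure X} [IsLocallyFiniteMeasure μ] [IsLocallyFiniteMeasure ν]
    {C : ℝ≥0∞} (hC : C ≠ ∞) (x : X) (R : ℝ) :
    ∫⁻ y in ball x R, (1 + C * (μ.rnDeriv ν y + 1)) ∂ν ≠ ∞ := by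
  have hμ : ∫⁻ y in ball x R, μ.rnDeriv ν y ∂ν ≠ ∞ :=
    ne_top_of_le_ne_top measure_ball_lt_top.ne (Measure.setLIntegral_rnDeriv_le _)
  have hν : ν (ball x R) ≠ ∞ := measure_ball_lt_top.ne
  rw [lintegral_add_left measurable_const, lintegral_const_mul _ (by fun_prop),
    lintegral_add_right _ measurable_const]
  simp only [lintegral_const, Measure.restrict_apply_univ]
  finiteness

theorem OscControlled.exists_hasWeakGradOn (hn : 2 ≤ n) {μ : Measure (En n)}
    [IsLocallyFiniteMeasure μ] {C : ℝ≥0∞} (hC : C ≠ ∞) {f : En n → En n} (hf : Continuous f)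
    (h : OscControlled n μ C f) :
    ∃ (D : LipschitzDecomposition volume f) (g : En n → En n →L[ℝ] En n), D.IsDeriv g ∧
      HasWeakGradOn f g univ ∧ LocallyIntegrable (fun x => ‖g x‖ ^ n) ∧
      ∀ᵐ x, ‖g x‖ₑ ^ n ≤ C * (4 ^ n * volume (ball (0 : En n) 1)) * μ.rnDeriv volume x := by
  have hn0 : n ≠ 0 := by omega
  have hfin : Module.finrank ℝ (En n) = n := finrank_euclideanSpace_fin
  set C' := C * (4 ^ n * volume (ball (0 : En n) 1))
  have hC' : C' ≠ ∞ := by finiteness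
  obtain ⟨D₀, hD₀⟩ := h.exists_lipschitzDecomposition (ν := volume) hC hf hfin hn0
    one_ne_zero one_ne_top
  obtain ⟨D, g, hgm, hconst, hpiece, hg⟩ := D₀.exists_isDeriv
  have hgC' := h.ae_enorm_pow_le hC hf hfin hn0 hg
  set w : En n → ℝ≥0∞ := fun x => 1 + C' * (μ.rnDeriv volume x + 1)
  have hwm : Measurable w := by fun_prop
  have hwint (R) : ∫⁻ x in ball 0 R, w x ≠ ∞ :=
    setLIntegral_ball_one_add_mul_rnDeriv_ne_top hC' 0 R
  have hDw (j) (x) (hx : x ∈ D.piece j) : (D.const j : ℝ≥0∞) ≤ w x :=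
    (le_one_add_pow zero_le hn0).trans
      (add_le_add_right (hconst ▸ hD₀ j x (hpiece j hx)) 1)
  have hgw : ∀ᵐ x, 1 + ‖g x‖ₑ ^ n ≤ w x := by
    filter_upwards [hgC'] with x hx
    exact add_le_add_right (hx.trans (by gcongr; exact le_self_add)) 1
  have hgint : LocallyIntegrable g := locallyIntegrable_of_ae_enorm_le hgm.aestronglyMeasurable
    (hgw.mono fun x hx => (le_one_add_pow zero_le hn0).trans hx) hwint
  refine ⟨D, g, hg, hg.hasWeakGradOn_univ hf hwm hwint hDw hgint fun i l => ?_,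
    locallyIntegrable_of_ae_enorm_le (hgm.norm.pow_const n).aestronglyMeasurable
      (hgw.mono fun x hx => by simpa using le_add_self.trans hx) hwint, hgC'⟩
  exact (h.comp_lipschitzWith (lipschitzWith_euclideanSpace_proj l)
    ).ae_volume_image_inter_line_eq_zero hn hC D.measure_compl_iUnion_piece i

end SobolevRegularity

theorem finely_qc_implies_qc_general (hn : 2 ≤ n) (f : En n → En n) (hf : IsHomeomorph f)
    {K : ℝ≥0∞} (hK : K ≠ ∞) (h : ∀ x, Kdensity (1 + 2 ^ n)⁻¹ f x ≤ K) :
    ∃ g : En n → (En n →L[ℝ] En n),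
      HasWeakGradOn f g univ ∧
      LocallyIntegrable f ∧
      LocallyIntegrable (fun x => ‖g x‖ ^ n) ∧
      ∃ K' : ℝ, ∀ᵐ x, ‖g x‖ ^ n ≤ K' * |LinearMap.det ((g x : En n →ₗ[ℝ] En n))| := by
  have hosc := oscControlled_of_Kdensity_lt hn hf fun x =>
    (h x).trans_lt (ENNReal.lt_add_right hK one_ne_zero)
  have hemb := hf.isClosedEmbedding.measurableEmbedding
  have := IsFiniteMeasureOnCompacts.comap' volume hf.continuous hemb
  set C := 2 ^ n * (K + 1) ^ ((n : ℝ) - 1)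
  have hC : C ≠ ∞ :=
    ENNReal.mul_ne_top (by simp) (rpow_ne_top_of_nonneg (by simp; omega) (by finiteness))
  obtain ⟨D, g, hD, hweak, hint, hgC⟩ := hosc.exists_hasWeakGradOn hn hC hf.continuous
  set C' := C * (4 ^ n * volume (ball (0 : En n) 1))
  have hC' : C' ≠ ∞ := by finiteness
  refine ⟨g, hweak, hf.continuous.locallyIntegrable, hint, C'.toReal, ?_⟩
  filter_upwards [hgC, hD.rnDeriv_comap_le hemb] with x hx hJ
  have hxJ : ‖g x‖ₑ ^ n ≤ C' * ENNReal.ofReal |(g x).det| := hx.trans (by gcongr)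
  simpa using ENNReal.toReal_mono (by finiteness) hxJ

/-- A homeomorphism `f : ℝⁿ → ℝⁿ` with `K^fine_f(x) ≤ K < ∞` everywhere is
quasiconformal: `f ∈ W^{1,n}_loc` and `‖∇f‖ⁿ ≤ K' |det ∇f|` a.e. for some `K' < ∞`. -/
theorem finely_qc_implies_qc (hn : 2 ≤ n) (f : En n → En n) (hf : IsHomeomorph f)
    (K : ℝ) (hK : ∀ x, Kfine f x ≤ ENNReal.ofReal K) :
    ∃ g : En n → (En n →L[ℝ] En n),
      HasWeakGradOn f g univ ∧
      LocallyIntegrable f ∧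
      LocallyIntegrable (fun x => ‖g x‖ ^ n) ∧
      ∃ K' : ℝ, ∀ᵐ x, ‖g x‖ ^ n ≤ K' * |LinearMap.det ((g x : En n →ₗ[ℝ] En n))| :=
  finely_qc_implies_qc_general hn f hf ofReal_ne_top fun x =>
    (Kdensity_le_Kfine (by omega) (by simp) f x).trans (hK x)

end
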